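/- (Intermediate-layer spectral bounds at random initialization.) There exist absolute constants C, c > 0 such that if m ≥ C·n·L·log(n·L), then with probability at least 1 − e^{−c·m/L} over the random matrices A and W_1,…,W_L, for all i ∈ [n] and all 1 ≤ a ≤ b ≤ L: (a) ‖W_b D_{i,b−1} W_{b−1} ⋯ D_{i,a} W_a‖₂ ≤ C·√L; (b) ‖W_b D_{i,b−1} W_{b−1} ⋯ D_{i,a} W_a v‖ ≤ 2‖v‖ for every vector v ∈ ℝ^m with at most m/(C·L·log m) nonzero entries; (c) ‖uᵀ W_b D_{i,b−1} W_{b−1} ⋯ D_{i,a} W_a‖ ≤ C·‖u‖ for every vector u ∈ ℝ^m with at most m/(C·L·log m) nonzero entries. -/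

import Mathlib

/-!
For a fixed vector `v`, follow `z_b = D_b W_b ⋯ D_a W_a v` layer by layer. Given the earlier layers,
each row `w` of `W_b` contributes `1_{w · h > 0} (w · z)²` to `‖z_b‖²`; the law of `w` is symmetric
and `(w · z)²` is even, so the gate acts at most like an independent fair coin
(`row_gate_bound`). With variance `2 / m`, the `κ`-th moment of `‖z_b‖²` therefore grows by a factor
of at most `exp (6 κ² / m)` per layer (`gate_moment`), which over all layers is at most
`exp (κ / 10)` as soon as `60 κ L ≤ m` (`zvec_moment`, `growth_pow_le`). The last matrix `W_b` is not
gated: it doubles the squared norm on average (`full_moment`), and a bilinear form `u · W_b z` has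
squared size about `κ / m ≲ 1 / L` in the `κ`-th moment (`bilin_moment`). Markov's inequality gives,
each with failure probability at most `exp (-κ / 8)`, the bounds `‖W_b z_{b-1}‖² ≤ 3` (`norm_tail`)
and `(u · W_b z_{b-1})² ≤ 1 / L` (`bilin_tail`) for fixed unit vectors `u`, `v`.

The symmetry argument uses the strict gate `0 < g`, while the sign matrices use `0 ≤ g`. The two
agree unless some preactivation has a zero coordinate, which has probability zero as long as no
activation vector vanishes, and that happens with probability at most `2⁻ᵐ` per layer
(`degen_prob`).

These bounds are applied on a `1/8`-net `P` of the sparse vectors and on a `1/8`-net `Q` of the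
vectors supported on one of about `L` blocks of about `m / L` coordinates each. A seminorm that is
bounded on a `1/8`-net is bounded on the whole unit ball up to the factor `8/7`
(`IsNet.seminorm_le`). The net `P` yields (b), since `8/7 · √3 < 2`. Splitting a general vector into
its blocks costs a factor `√L` by Cauchy–Schwarz (`seminorm_le_of_blocks`): from the norm bound on `Q`
this yields (a), and from the bound `1 / √L` on the bilinear forms over `P × Q` it yields (c)
(`bounds_of_nets`). With `κ` of order `m / L`, a union bound over the nets, the samples and the pairs
of layers finishes the proof.
-/

open MeasureTheory ProbabilityTheory

noncomputable section

namespace DNNPaper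

/-! ### Elementary linear algebra on plain function matrices -/

def mulVec {p q : ℕ} (M : Fin p → Fin q → ℝ) (v : Fin q → ℝ) : Fin p → ℝ :=
  fun i => ∑ j, M i j * v j

def mmul {p q r : ℕ} (M : Fin p → Fin q → ℝ) (N : Fin q → Fin r → ℝ) :
    Fin p → Fin r → ℝ :=
  fun i k => ∑ j, M i j * N j k

def transpose {p q : ℕ} (M : Fin p → Fin q → ℝ) : Fin q → Fin p → ℝ :=
  fun j i => M i j

def dot {p : ℕ} (u v : Fin p → ℝ) : ℝ := ∑ i, u i * v i

def outer {p q : ℕ} (u : Fin p → ℝ) (v : Fin q → ℝ) : Fin p → Fin q → ℝ :=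
  fun i j => u i * v j

def idMat (p : ℕ) : Fin p → Fin p → ℝ := fun i j => if i = j then 1 else 0

def diagMat {p : ℕ} (dg : Fin p → ℝ) : Fin p → Fin p → ℝ :=
  fun i j => if i = j then dg i else 0

def relu {p : ℕ} (v : Fin p → ℝ) : Fin p → ℝ := fun k => max (v k) 0

/-- diagonal entries of the ReLU sign matrix of a pre-activation vector -/
def signOf {p : ℕ} (g : Fin p → ℝ) : Fin p → ℝ := fun k => if 0 ≤ g k then 1 else 0

/-- Euclidean norm -/
def l2 {p : ℕ} (v : Fin p → ℝ) : ℝ := Real.sqrt (∑ k, v k ^ 2)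

/-- max-norm -/
def linf {p : ℕ} (v : Fin p → ℝ) : ℝ := ⨆ k, |v k|

/-- number of nonzero entries -/
def l0 {p : ℕ} (v : Fin p → ℝ) : ℕ := (Finset.univ.filter fun k => v k ≠ 0).card

/-- Frobenius norm -/
def frob {p q : ℕ} (M : Fin p → Fin q → ℝ) : ℝ := Real.sqrt (∑ i, ∑ j, M i j ^ 2)

/-- spectral norm (ℓ₂ operator norm) -/
def spec {p q : ℕ} (M : Fin p → Fin q → ℝ) : ℝ :=
  sSup {r | ∃ v : Fin q → ℝ, l2 v ≤ 1 ∧ r = l2 (mulVec M v)}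

/-- trace (Frobenius) inner product -/
def innerF {p q : ℕ} (M N : Fin p → Fin q → ℝ) : ℝ := ∑ i, ∑ j, M i j * N i j

/-- `‖W‖₂ = max_ℓ ‖W_ℓ‖₂` for a tuple of matrices -/
def tupleSpec {m L : ℕ} (W : Fin L → Fin m → Fin m → ℝ) : ℝ := ⨆ ℓ, spec (W ℓ)

/-! ### The network -/

variable {𝔡 m d L : ℕ}

/-- `Wat W ℓ` is the weight matrix of layer `ℓ ∈ {1,…,L}` (identity outside this range). -/
def Wat (W : Fin L → Fin m → Fin m → ℝ) (ℓ : ℕ) : Fin m → Fin m → ℝ :=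
  if h : 1 ≤ ℓ ∧ ℓ ≤ L then W ⟨ℓ - 1, by omega⟩ else idMat m

/-- the forward (post-activation) vectors `h_ℓ`, `ℓ = 0,1,…,L` -/
def hseq (A : Fin m → Fin 𝔡 → ℝ) (W : Fin L → Fin m → Fin m → ℝ) (x : Fin 𝔡 → ℝ) :
    ℕ → Fin m → ℝ
  | 0 => relu (mulVec A x)
  | ℓ + 1 =>
      if ℓ + 1 ≤ L then relu (mulVec (Wat W (ℓ + 1)) (hseq A W x ℓ)) else hseq A W x ℓ

/-- the pre-activation vectors `g_ℓ`, `ℓ = 0,1,…,L` -/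
def gseq (A : Fin m → Fin 𝔡 → ℝ) (W : Fin L → Fin m → Fin m → ℝ) (x : Fin 𝔡 → ℝ) :
    ℕ → Fin m → ℝ
  | 0 => mulVec A x
  | ℓ + 1 => mulVec (Wat W (ℓ + 1)) (hseq A W x ℓ)

/-- `chainProd W Dfun a b = (D_b W_b) (D_{b-1} W_{b-1}) ⋯ (D_a W_a)` where `D_ℓ` is the
diagonal matrix with entries `Dfun ℓ`; it is the identity when `b < a`, and factors with
index outside `{1,…,L}` are skipped. -/
def chainProd (W : Fin L → Fin m → Fin m → ℝ) (Dfun : ℕ → Fin m → ℝ) (a : ℕ) :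
    ℕ → Fin m → Fin m → ℝ
  | 0 => idMat m
  | b + 1 =>
      if a ≤ b + 1 ∧ b + 1 ≤ L then
        mmul (mmul (diagMat (Dfun (b + 1))) (Wat W (b + 1))) (chainProd W Dfun a b)
      else chainProd W Dfun a b

/-- `prodDW A W x a b = D_b W_b D_{b-1} W_{b-1} ⋯ D_a W_a` with the sign matrices of input `x` -/
def prodDW (A : Fin m → Fin 𝔡 → ℝ) (W : Fin L → Fin m → Fin m → ℝ) (x : Fin 𝔡 → ℝ)
    (a b : ℕ) : Fin m → Fin m → ℝ :=
  chainProd W (fun ℓ => signOf (gseq A W x ℓ)) a b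

/-- `Back_ℓ = B D_L W_L ⋯ D_ℓ W_ℓ` (equal to `B` for `ℓ = L+1`) -/
def backMat (B : Fin d → Fin m → ℝ) (A : Fin m → Fin 𝔡 → ℝ)
    (W : Fin L → Fin m → Fin m → ℝ) (x : Fin 𝔡 → ℝ) (ℓ : ℕ) : Fin d → Fin m → ℝ :=
  mmul B (prodDW A W x ℓ L)

/-- formula gradient w.r.t. `W_ℓ` with an arbitrary (fake) loss vector `v`:
`D_ℓ (Back_{ℓ+1}ᵀ v) h_{ℓ-1}ᵀ` -/
def gradW (B : Fin d → Fin m → ℝ) (A : Fin m → Fin 𝔡 → ℝ)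
    (W : Fin L → Fin m → Fin m → ℝ) (x : Fin 𝔡 → ℝ) (v : Fin d → ℝ) (ℓ : ℕ) :
    Fin m → Fin m → ℝ :=
  outer (mulVec (diagMat (signOf (gseq A W x ℓ)))
      (mulVec (transpose (backMat B A W x (ℓ + 1))) v))
    (hseq A W x (ℓ - 1))

/-- loss vector `B h_L − y` -/
def lossVec (B : Fin d → Fin m → ℝ) (A : Fin m → Fin 𝔡 → ℝ)
    (W : Fin L → Fin m → Fin m → ℝ) (x : Fin 𝔡 → ℝ) (y : Fin d → ℝ) : Fin d → ℝ :=
  fun j => mulVec B (hseq A W x L) j - y j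

/-- per-sample ℓ₂ regression loss `F_i` -/
def objFi (B : Fin d → Fin m → ℝ) (A : Fin m → Fin 𝔡 → ℝ)
    (W : Fin L → Fin m → Fin m → ℝ) (x : Fin 𝔡 → ℝ) (y : Fin d → ℝ) : ℝ :=
  (1 / 2) * l2 (lossVec B A W x y) ^ 2

/-- total objective `F` -/
def objF {n : ℕ} (B : Fin d → Fin m → ℝ) (A : Fin m → Fin 𝔡 → ℝ)
    (W : Fin L → Fin m → Fin m → ℝ) (x : Fin n → Fin 𝔡 → ℝ)
    (y : Fin n → Fin d → ℝ) : ℝ :=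
  ∑ i, objFi B A W (x i) (y i)

/-- formula gradient of the total objective w.r.t. `W_ℓ` -/
def gradF {n : ℕ} (B : Fin d → Fin m → ℝ) (A : Fin m → Fin 𝔡 → ℝ)
    (W : Fin L → Fin m → Fin m → ℝ) (x : Fin n → Fin 𝔡 → ℝ)
    (y : Fin n → Fin d → ℝ) (ℓ : ℕ) : Fin m → Fin m → ℝ :=
  ∑ i, gradW B A W (x i) (lossVec B A W (x i) (y i)) ℓ

/-! ### Random initialization -/

/-- a `p × q` random matrix with i.i.d. `N(0, v)` entries -/
def gaussMat (p q : ℕ) (v : NNReal) : Measure (Fin p → Fin q → ℝ) :=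
  Measure.pi fun _ => Measure.pi fun _ => gaussianReal 0 v

/-- joint law of `(A, W)` at random initialization -/
def initAW (𝔡 m L : ℕ) :
    Measure ((Fin m → Fin 𝔡 → ℝ) × (Fin L → Fin m → Fin m → ℝ)) :=
  (gaussMat m 𝔡 (2 / m)).prod (Measure.pi fun _ : Fin L => gaussMat m m (2 / m))

/-- joint law of `(A, W, B)` at random initialization -/
def initMeasure (𝔡 m d L : ℕ) :
    Measure ((Fin m → Fin 𝔡 → ℝ) ×
      (Fin L → Fin m → Fin m → ℝ) × (Fin d → Fin m → ℝ)) :=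
  (gaussMat m 𝔡 (2 / m)).prod
    ((Measure.pi fun _ : Fin L => gaussMat m m (2 / m)).prod (gaussMat d m (1 / d)))


/-! ### Gaussian vectors and matrices -/

/-- Squared Euclidean norm. -/
def nsq {p : ℕ} (v : Fin p → ℝ) : ℝ := ∑ k, v k ^ 2

lemma nsq_nonneg {p : ℕ} (v : Fin p → ℝ) : 0 ≤ nsq v :=
  Finset.sum_nonneg fun _ _ => sq_nonneg _

lemma nsq_eq_zero {p : ℕ} {v : Fin p → ℝ} (h : nsq v = 0) : v = 0 := by
  funext k
  have := (Finset.sum_eq_zero_iff_of_nonneg (fun i _ => sq_nonneg (v i))).1 h k (Finset.mem_univ k)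
  simpa using this

lemma nsq_pos {p : ℕ} {v : Fin p → ℝ} (h : v ≠ 0) : 0 < nsq v :=
  lt_of_le_of_ne (nsq_nonneg v) fun h' => h (nsq_eq_zero h'.symm)

/-- `nsq` as a nonnegative real, the form in which variances are given. -/
def nsqNN {p : ℕ} (v : Fin p → ℝ) : NNReal := ⟨nsq v, nsq_nonneg v⟩

instance instProbGaussMat (p q : ℕ) (v : NNReal) : IsProbabilityMeasure (gaussMat p q v) := by
  unfold gaussMat; infer_instance

instance instProbInit (𝔡 m L : ℕ) : IsProbabilityMeasure (initAW 𝔡 m L) := by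
  unfold initAW; infer_instance

/-- A linear functional of a vector of i.i.d. centred Gaussians is Gaussian. -/
lemma map_linear_gaussian {q : ℕ} (v : NNReal) (z : Fin q → ℝ) :
    (Measure.pi fun _ : Fin q => gaussianReal 0 v).map (fun w => ∑ j, w j * z j)
      = gaussianReal 0 (v * nsqNN z) := by
  have hmeas : Measurable fun w : Fin q → ℝ => ∑ j, w j * z j := by fun_prop
  have := Measure.isProbabilityMeasure_map (μ := Measure.pi fun _ : Fin q => gaussianReal 0 v)
    hmeas.aemeasurable
  apply Measure.ext_of_charFun
  funext t
  rw [charFun_gaussianReal, charFun_apply_real, integral_map hmeas.aemeasurable (by fun_prop)]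
  have h1 : ∀ w : Fin q → ℝ, Complex.exp (t * ((∑ j, w j * z j : ℝ) : ℂ) * Complex.I)
      = ∏ j, Complex.exp (((z j * t : ℝ) : ℂ) * (w j : ℂ) * Complex.I) := by
    intro w
    rw [← Complex.exp_sum]
    congr 1
    push_cast
    rw [Finset.mul_sum, Finset.sum_mul]
    refine Finset.sum_congr rfl fun j _ => by ring
  simp_rw [h1]
  rw [integral_fintype_prod_eq_prod (fun j (x : ℝ) =>
    Complex.exp (((z j * t : ℝ) : ℂ) * (x : ℂ) * Complex.I))]
  have h2 : ∀ j, ∫ x : ℝ, Complex.exp (((z j * t : ℝ) : ℂ) * (x : ℂ) * Complex.I) ∂gaussianReal 0 v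
      = Complex.exp (-(v * (z j * t) ^ 2 / 2)) := by
    intro j
    rw [← charFun_apply_real, charFun_gaussianReal]
    push_cast; congr 1; ring
  simp_rw [h2]
  rw [← Complex.exp_sum]
  congr 1
  have : ((v * nsqNN z : NNReal) : ℂ) = (v : ℂ) * ∑ j, (z j : ℂ) ^ 2 := by
    have : ((nsqNN z : NNReal) : ℝ) = nsq z := rfl
    push_cast
    rw [this, nsq]; push_cast; rfl
  rw [this, Finset.sum_neg_distrib]
  simp only [Complex.ofReal_zero]
  rw [Finset.mul_sum, Finset.sum_mul, Finset.sum_div, mul_zero, zero_mul, zero_sub]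
  congr 1
  refine Finset.sum_congr rfl fun j _ => by ring

/-- Applying a Gaussian matrix to a fixed vector yields i.i.d. Gaussian coordinates. -/
lemma map_mulVec_gaussMat {p q : ℕ} (v : NNReal) (z : Fin q → ℝ) :
    (gaussMat p q v).map (fun M => mulVec M z)
      = Measure.pi fun _ : Fin p => gaussianReal 0 (v * nsqNN z) := by
  have hm : Measurable fun w : Fin q → ℝ => ∑ j, w j * z j := by fun_prop
  have := Measure.isProbabilityMeasure_map (μ := Measure.pi fun _ : Fin q => gaussianReal 0 v)
    hm.aemeasurable
  have := Measure.pi_map_pi (μ := fun _ : Fin p => Measure.pi fun _ : Fin q => gaussianReal 0 v)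
    (f := fun _ w => ∑ j, w j * z j) (fun _ => hm.aemeasurable)
  rw [map_linear_gaussian] at this
  exact this

lemma lintegral_exp_sq (v : NNReal) (τ : ℝ) (h : 2 * τ * v < 1) :
    ∫⁻ x, ENNReal.ofReal (Real.exp (τ * x ^ 2)) ∂gaussianReal 0 v
      = ENNReal.ofReal (√(1 - 2 * τ * v))⁻¹ := by
  by_cases hv : v = 0
  · subst hv
    rw [gaussianReal_zero_var, lintegral_dirac' _ (by fun_prop)]
    simp
  have hv' : (0 : ℝ) < v := by positivity
  rw [gaussianReal_of_var_ne_zero _ hv,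
    lintegral_withDensity_eq_lintegral_mul _ (measurable_gaussianPDF 0 v) (by fun_prop)]
  set b : ℝ := 1 / (2 * v) - τ with hb
  have hbv : 2 * v * b = 1 - 2 * τ * v := by rw [hb]; field_simp
  have hbpos : 0 < b := by
    by_contra hneg
    nlinarith
  have hfun : ∀ x : ℝ, (gaussianPDF 0 v * fun x => ENNReal.ofReal (Real.exp (τ * x ^ 2))) x
      = ENNReal.ofReal ((√(2 * Real.pi * v))⁻¹ * Real.exp (-b * x ^ 2)) := by
    intro x
    simp only [Pi.mul_apply, gaussianPDF, gaussianPDFReal]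
    rw [← ENNReal.ofReal_mul (by positivity), mul_assoc, ← Real.exp_add]
    congr 3
    rw [hb]; field_simp; ring
  simp_rw [hfun]
  rw [← ofReal_integral_eq_lintegral_ofReal
    ((integrable_exp_neg_mul_sq hbpos).const_mul _)
    (Filter.Eventually.of_forall fun x => by positivity),
    integral_const_mul, integral_gaussian, ← hbv]
  congr 1
  rw [← Real.sqrt_inv, ← Real.sqrt_inv, ← Real.sqrt_mul (by positivity)]
  congr 1
  have := Real.pi_pos
  field_simp

lemma inv_sqrt_bound {t : ℝ} (h0 : 0 ≤ t) (h1 : t ≤ 1 / 16) :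
    (√(1 - 4 * t))⁻¹ ≤ 1 + 2 * t + 12 * t ^ 2 := by
  rw [← Real.sqrt_inv]
  apply Real.sqrt_le_iff.2
  refine ⟨by positivity, ?_⟩
  rw [inv_le_iff_one_le_mul₀ (by linarith)]
  have h2 : 0 ≤ t ^ 2 := sq_nonneg t
  have h3 : t ^ 3 ≤ t ^ 2 / 16 := by nlinarith
  have h4 : t ^ 4 ≤ t ^ 2 / 256 := by nlinarith
  have h5 : t ^ 5 ≤ t ^ 2 / 4096 := by nlinarith
  nlinarith

lemma pow_le_exp_sub {y : ℝ} (hy : 0 ≤ y) (k : ℕ) : y ^ k ≤ Real.exp (k * (y - 1)) := by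
  rw [Real.exp_nat_mul]
  refine pow_le_pow_left₀ hy ?_ k
  have := Real.add_one_le_exp (y - 1)
  linarith

/-- The exponential of a sum over rows of a Gaussian matrix has a product expectation. -/
lemma lintegral_exp_rows {p q : ℕ} (v : NNReal) (f : (Fin q → ℝ) → ℝ) (hf : Measurable f) :
    ∫⁻ M, ENNReal.ofReal (Real.exp (∑ k, f (M k))) ∂gaussMat p q v
      = (∫⁻ w, ENNReal.ofReal (Real.exp (f w)) ∂Measure.pi fun _ : Fin q => gaussianReal 0 v) ^ p := by
  have h : ∀ M : Fin p → Fin q → ℝ, ENNReal.ofReal (Real.exp (∑ k, f (M k)))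
      = ∏ k, ENNReal.ofReal (Real.exp (f (M k))) := by
    intro M
    rw [Real.exp_sum, ENNReal.ofReal_prod_of_nonneg fun _ _ => (Real.exp_pos _).le]
  simp_rw [h]
  unfold gaussMat
  have hX : ∀ _ : Fin p, Measurable fun w : Fin q → ℝ => ENNReal.ofReal (Real.exp (f w)) :=
    fun _ => by fun_prop
  rw [lintegral_prod_eq_prod_lintegral_of_indepFun Finset.univ
    (fun k (M : Fin p → Fin q → ℝ) => ENNReal.ofReal (Real.exp (f (M k))))
    (iIndepFun_pi (X := fun _ w => ENNReal.ofReal (Real.exp (f w)))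
      (fun k => (hX k).aemeasurable)) (fun k => (hX k).comp (measurable_pi_apply k))]
  have h2 : ∀ k : Fin p, ∫⁻ M : Fin p → Fin q → ℝ, ENNReal.ofReal (Real.exp (f (M k)))
        ∂Measure.pi (fun _ => Measure.pi fun _ => gaussianReal 0 v)
      = ∫⁻ w, ENNReal.ofReal (Real.exp (f w)) ∂Measure.pi fun _ : Fin q => gaussianReal 0 v := by
    intro k
    exact (measurePreserving_eval (fun _ : Fin p => Measure.pi fun _ : Fin q => gaussianReal 0 v)
      k).lintegral_comp (hX k)
  simp_rw [h2]
  simp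

/-! ### Moments of one Gaussian layer -/

/-- Keep the coordinates of `y` at which `g` is strictly positive. This is `D y` for the sign
matrix `D` of `g`, except that coordinates with `g k = 0` are switched off. -/
def gate {p : ℕ} (g y : Fin p → ℝ) : Fin p → ℝ := fun k => if 0 < g k then y k else 0

/-- By the symmetry `w ↦ -w`, the gate `0 < w · h` acts on the even function `(w · z)²` at most
like an independent fair coin. -/
lemma row_gate_bound {q : ℕ} (v : NNReal) (h z : Fin q → ℝ) (τ : ℝ) (hτ : 0 ≤ τ)
    (hlt : 2 * τ * (v * nsq z) < 1) :
    ∫⁻ w, ENNReal.ofReal (Real.exp (τ * if 0 < ∑ j, w j * h j then (∑ j, w j * z j) ^ 2 else 0))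
        ∂(Measure.pi fun _ : Fin q => gaussianReal 0 v)
      ≤ ENNReal.ofReal ((1 + (√(1 - 2 * τ * (v * nsq z)))⁻¹) / 2) := by
  set P := Measure.pi fun _ : Fin q => gaussianReal 0 v with hP
  set F : (Fin q → ℝ) → ENNReal := fun w =>
    ENNReal.ofReal (Real.exp (τ * if 0 < ∑ j, w j * h j then (∑ j, w j * z j) ^ 2 else 0)) with hF
  have hFm : Measurable F := by
    apply ENNReal.measurable_ofReal.comp
    apply Real.measurable_exp.comp
    apply Measurable.const_mul
    exact Measurable.ite (measurableSet_lt measurable_const (by fun_prop)) (by fun_prop)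
      measurable_const
  have hneg : P.map (fun w => -w) = P := by
    have := Measure.pi_map_pi (μ := fun _ : Fin q => gaussianReal 0 v)
      (f := fun _ x => -x) (fun _ => measurable_neg.aemeasurable)
    simp only [gaussianReal_map_neg, neg_zero] at this
    exact this
  have hflip : ∫⁻ w, F (-w) ∂P = ∫⁻ w, F w ∂P := by
    conv_rhs => rw [← hneg]
    rw [lintegral_map hFm measurable_neg]
  have hsum : ∀ w, F w + F (-w) ≤ 1 + ENNReal.ofReal (Real.exp (τ * (∑ j, w j * z j) ^ 2)) := by
    intro w
    have e1 : ∑ j, (-w) j * h j = - ∑ j, w j * h j := by simp [Finset.sum_neg_distrib]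
    have e2 : ∑ j, (-w) j * z j = - ∑ j, w j * z j := by simp [Finset.sum_neg_distrib]
    simp only [hF]
    rw [e1, e2]
    have hone : ENNReal.ofReal (Real.exp (τ * 0)) = 1 := by simp
    have hge : (1 : ENNReal) ≤ ENNReal.ofReal (Real.exp (τ * (∑ j, w j * z j) ^ 2)) := by
      rw [← ENNReal.ofReal_one]
      exact ENNReal.ofReal_le_ofReal (Real.one_le_exp (by positivity))
    rcases lt_trichotomy 0 (∑ j, w j * h j) with hs | hs | hs
    · rw [if_pos hs, if_neg (by linarith), hone, add_comm]
    · rw [← hs]; simp only [lt_irrefl, if_false, neg_zero, hone]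
      gcongr
    · rw [if_neg (by linarith), if_pos (by linarith), hone, neg_sq]
  have h2 : ∫⁻ w, F w ∂P + ∫⁻ w, F w ∂P
      ≤ 1 + ENNReal.ofReal (√(1 - 2 * τ * (v * nsq z)))⁻¹ := by
    nth_rewrite 2 [← hflip]
    rw [← lintegral_add_left hFm]
    refine (lintegral_mono hsum).trans ?_
    rw [lintegral_add_left measurable_const]
    have h3 : ∫⁻ w, ENNReal.ofReal (Real.exp (τ * (∑ j, w j * z j) ^ 2)) ∂P
        = ENNReal.ofReal (√(1 - 2 * τ * (v * nsq z)))⁻¹ := by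
      have := lintegral_exp_sq (v * nsqNN z) τ hlt
      rw [← map_linear_gaussian, lintegral_map (by fun_prop) (by fun_prop)] at this
      exact this
    rw [h3]; simp
  have h4 : (1 : ENNReal) + ENNReal.ofReal (√(1 - 2 * τ * (v * nsq z)))⁻¹
      = ENNReal.ofReal ((1 + (√(1 - 2 * τ * (v * nsq z)))⁻¹) / 2)
        + ENNReal.ofReal ((1 + (√(1 - 2 * τ * (v * nsq z)))⁻¹) / 2) := by
    rw [← ENNReal.ofReal_add (by positivity) (by positivity), add_halves,
      ENNReal.ofReal_add (by positivity) (by positivity), ENNReal.ofReal_one]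
  rw [h4] at h2
  by_contra hcon
  push Not at hcon
  exact absurd h2 (not_le.2 (ENNReal.add_lt_add hcon hcon))

/-- If each row of an `m × m` Gaussian matrix has exponential moment at most `exp (t + 6 t²)` with
`t = κ / m`, then the rows together, recentred by `κ`, have exponential moment `exp (6 κ² / m)`. -/
lemma layer_of_row {m : ℕ} (hm : 0 < m) (v : NNReal) (κ : ℕ) (f : (Fin m → ℝ) → ℝ)
    (hf : Measurable f)
    (h : ∫⁻ w, ENNReal.ofReal (Real.exp (f w)) ∂(Measure.pi fun _ : Fin m => gaussianReal 0 v)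
      ≤ ENNReal.ofReal (Real.exp ((κ : ℝ) / m + 6 * ((κ : ℝ) / m) ^ 2))) :
    ∫⁻ M, ENNReal.ofReal (Real.exp ((∑ k, f (M k)) - κ)) ∂gaussMat m m v
      ≤ ENNReal.ofReal (Real.exp (6 * κ ^ 2 / m)) := by
  have h1 : ∀ M : Fin m → Fin m → ℝ, ENNReal.ofReal (Real.exp ((∑ k, f (M k)) - κ))
      = ENNReal.ofReal (Real.exp (-κ)) * ENNReal.ofReal (Real.exp (∑ k, f (M k))) := by
    intro M
    rw [← ENNReal.ofReal_mul (Real.exp_pos _).le, ← Real.exp_add]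
    congr 2; ring
  simp_rw [h1]
  rw [lintegral_const_mul' _ _ ENNReal.ofReal_ne_top, lintegral_exp_rows v f hf]
  calc _ ≤ ENNReal.ofReal (Real.exp (-κ)) *
        ENNReal.ofReal (Real.exp ((κ : ℝ) / m + 6 * ((κ : ℝ) / m) ^ 2)) ^ m := by gcongr
    _ = _ := by
      rw [← ENNReal.ofReal_pow (Real.exp_pos _).le, ← Real.exp_nat_mul,
        ← ENNReal.ofReal_mul (Real.exp_pos _).le, ← Real.exp_add]
      congr 2
      have : (m : ℝ) ≠ 0 := by positivity
      field_simp
      ring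

lemma two_div_mul {m : ℕ} (x : ℝ) : ((2 / (m : NNReal) : NNReal) : ℝ) * x = 2 / m * x := by
  push_cast; rfl

/-- One gated Gaussian layer: the `κ`-th moment of the squared norm grows by at most
`exp (6 κ² / m)`. -/
lemma gate_moment {m : ℕ} (hm : 0 < m) (κ : ℕ) (hκ0 : 0 < κ) (hκ : 16 * κ ≤ m)
    (h z : Fin m → ℝ) :
    ∫⁻ M, ENNReal.ofReal (nsq (gate (mulVec M h) (mulVec M z)) ^ κ) ∂gaussMat m m (2 / m)
      ≤ ENNReal.ofReal (Real.exp (6 * κ ^ 2 / m)) * ENNReal.ofReal (nsq z ^ κ) := by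
  by_cases hz : z = 0
  · subst hz
    have : ∀ M : Fin m → Fin m → ℝ, nsq (gate (mulVec M h) (mulVec M 0)) = 0 := by
      intro M; simp [nsq, gate, mulVec]
    simp [this, hκ0.ne']
  have hzp := nsq_pos hz
  have hm' : (0 : ℝ) < m := by exact_mod_cast hm
  have hκ' : 16 * (κ : ℝ) ≤ m := by exact_mod_cast hκ
  set τ : ℝ := κ / nsq z with hτ
  set f : (Fin m → ℝ) → ℝ :=
    fun w => τ * if 0 < ∑ j, w j * h j then (∑ j, w j * z j) ^ 2 else 0 with hf
  have hfm : Measurable f := by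
    apply Measurable.const_mul
    exact Measurable.ite (measurableSet_lt measurable_const (by fun_prop)) (by fun_prop)
      measurable_const
  have ht : 2 * τ * (((2 / (m : NNReal) : NNReal) : ℝ) * nsq z) = 4 * ((κ : ℝ) / m) := by
    rw [two_div_mul, hτ]; field_simp; ring
  have ht1 : (κ : ℝ) / m ≤ 1 / 16 := by rw [div_le_div_iff₀ hm' (by norm_num)]; linarith
  have hrow : ∫⁻ w, ENNReal.ofReal (Real.exp (f w))
        ∂(Measure.pi fun _ : Fin m => gaussianReal 0 (2 / (m : NNReal)))
      ≤ ENNReal.ofReal (Real.exp ((κ : ℝ) / m + 6 * ((κ : ℝ) / m) ^ 2)) := by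
    refine (row_gate_bound _ h z τ (by positivity) (by rw [ht]; linarith)).trans ?_
    apply ENNReal.ofReal_le_ofReal
    rw [ht]
    have h1 := inv_sqrt_bound (by positivity) ht1
    have h2 := Real.add_one_le_exp ((κ : ℝ) / m + 6 * ((κ : ℝ) / m) ^ 2)
    linarith
  have hl := layer_of_row hm _ κ f hfm hrow
  calc _ ≤ ∫⁻ M, ENNReal.ofReal (Real.exp ((∑ k, f (M k)) - κ)) * ENNReal.ofReal (nsq z ^ κ)
        ∂gaussMat m m (2 / m) := by
        refine lintegral_mono fun M => ?_
        rw [← ENNReal.ofReal_mul (Real.exp_pos _).le]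
        apply ENNReal.ofReal_le_ofReal
        have h1 := pow_le_exp_sub (y := nsq (gate (mulVec M h) (mulVec M z)) / nsq z)
          (div_nonneg (nsq_nonneg _) hzp.le) κ
        rw [div_pow, div_le_iff₀ (by positivity)] at h1
        refine h1.trans_eq ?_
        congr 2
        have hk : ∀ k, f (M k) = τ * gate (mulVec M h) (mulVec M z) k ^ 2 := by
          intro k
          change τ * (if 0 < mulVec M h k then mulVec M z k ^ 2 else 0)
            = τ * (if 0 < mulVec M h k then mulVec M z k else 0) ^ 2
          by_cases hk : 0 < mulVec M h k
          · rw [if_pos hk, if_pos hk]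
          · rw [if_neg hk, if_neg hk]; simp
        simp only [hk]
        rw [← Finset.mul_sum, mul_sub, mul_one, hτ, div_mul_eq_mul_div, mul_div_assoc]
        rfl
    _ ≤ _ := by
        rw [lintegral_mul_const' _ _ ENNReal.ofReal_ne_top]
        gcongr

/-- One ungated Gaussian layer: `‖M z‖²` has `κ`-th moment close to
`(2 ‖z‖²)^κ`. -/
lemma full_moment {m : ℕ} (hm : 0 < m) (κ : ℕ) (hκ0 : 0 < κ) (hκ : 16 * κ ≤ m)
    (z : Fin m → ℝ) :
    ∫⁻ M, ENNReal.ofReal (nsq (mulVec M z) ^ κ) ∂gaussMat m m (2 / m)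
      ≤ ENNReal.ofReal (2 ^ κ * Real.exp (6 * κ ^ 2 / m)) * ENNReal.ofReal (nsq z ^ κ) := by
  by_cases hz : z = 0
  · subst hz
    have : ∀ M : Fin m → Fin m → ℝ, nsq (mulVec M 0) = 0 := by
      intro M; simp [nsq, mulVec]
    simp [this, hκ0.ne']
  have hzp := nsq_pos hz
  have hm' : (0 : ℝ) < m := by exact_mod_cast hm
  have hκ' : 16 * (κ : ℝ) ≤ m := by exact_mod_cast hκ
  set τ : ℝ := κ / (2 * nsq z) with hτ
  set f : (Fin m → ℝ) → ℝ := fun w => τ * (∑ j, w j * z j) ^ 2 with hf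
  have hfm : Measurable f := by fun_prop
  have ht : 2 * τ * (((2 / (m : NNReal) : NNReal) : ℝ) * nsq z) = 4 * ((κ : ℝ) / m / 2) := by
    rw [two_div_mul, hτ]; field_simp; ring
  have ht0 : 0 ≤ (κ : ℝ) / m := by positivity
  have ht1 : (κ : ℝ) / m ≤ 1 / 16 := by rw [div_le_div_iff₀ hm' (by norm_num)]; linarith
  have hrow : ∫⁻ w, ENNReal.ofReal (Real.exp (f w))
        ∂(Measure.pi fun _ : Fin m => gaussianReal 0 (2 / (m : NNReal)))
      ≤ ENNReal.ofReal (Real.exp ((κ : ℝ) / m + 6 * ((κ : ℝ) / m) ^ 2)) := by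
    have := lintegral_exp_sq (2 / (m : NNReal) * nsqNN z) τ
      (by push_cast [NNReal.coe_mul]; exact lt_of_eq_of_lt ht (by linarith))
    rw [← map_linear_gaussian, lintegral_map (by fun_prop) (by fun_prop)] at this
    refine this.trans_le ?_
    apply ENNReal.ofReal_le_ofReal
    have h0 : 2 * τ * ((2 / (m : NNReal) * nsqNN z : NNReal) : ℝ) = 4 * ((κ : ℝ) / m / 2) := ht
    rw [h0]
    have h1 := inv_sqrt_bound (t := (κ : ℝ) / m / 2) (by positivity) (by linarith)
    have h2 := Real.add_one_le_exp ((κ : ℝ) / m + 6 * ((κ : ℝ) / m) ^ 2)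
    nlinarith [sq_nonneg ((κ : ℝ) / m)]
  have hl := layer_of_row hm _ κ f hfm hrow
  calc _ ≤ ∫⁻ M, ENNReal.ofReal (Real.exp ((∑ k, f (M k)) - κ)) *
          ENNReal.ofReal (2 ^ κ * nsq z ^ κ) ∂gaussMat m m (2 / m) := by
        refine lintegral_mono fun M => ?_
        rw [← ENNReal.ofReal_mul (Real.exp_pos _).le]
        apply ENNReal.ofReal_le_ofReal
        have h1 := pow_le_exp_sub (y := nsq (mulVec M z) / (2 * nsq z))
          (div_nonneg (nsq_nonneg _) (by positivity)) κ
        rw [div_pow, div_le_iff₀ (by positivity), mul_pow] at h1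
        refine h1.trans_eq ?_
        congr 2
        simp only [hf, hτ, nsq, mulVec]
        rw [← Finset.mul_sum, mul_sub, mul_one, div_mul_eq_mul_div, mul_div_assoc]
    _ ≤ _ := by
        rw [lintegral_mul_const' _ _ ENNReal.ofReal_ne_top]
        refine (mul_le_mul_left hl _).trans_eq ?_
        rw [← ENNReal.ofReal_mul (Real.exp_pos _).le, ← ENNReal.ofReal_mul (by positivity)]
        congr 1; ring

/-- Moments of the bilinear form `u · M z` of a Gaussian matrix. -/
lemma bilin_moment {m : ℕ} (hm : 0 < m) (κ : ℕ) (hκ0 : 0 < κ)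
    (u z : Fin m → ℝ) (hu : nsq u ≤ 1) :
    ∫⁻ M, ENNReal.ofReal (((∑ k, mulVec M z k * u k) ^ 2) ^ κ) ∂gaussMat m m (2 / m)
      ≤ ENNReal.ofReal (2 * (16 * κ / m) ^ κ) * ENNReal.ofReal (nsq z ^ κ) := by
  by_cases hz : z = 0
  · subst hz
    have : ∀ M : Fin m → Fin m → ℝ, ∀ k, mulVec M 0 k = 0 := by
      intro M; simp [mulVec]
    simp [this, hκ0.ne']
  have hzp := nsq_pos hz
  have hm' : (0 : ℝ) < m := by exact_mod_cast hm
  have hκ' : (0 : ℝ) < κ := by exact_mod_cast hκ0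
  -- normalisation making the exponential moment of order `κ r` a constant
  set r : ℝ := m / (16 * κ * nsq z) with hr
  have hrpos : 0 < r := by positivity
  have hvar : ((2 / (m : NNReal) * nsqNN z * nsqNN u : NNReal) : ℝ) = 2 / m * nsq z * nsq u := by
    push_cast; rfl
  have hlt : 2 * (κ * r) * ((2 / (m : NNReal) * nsqNN z * nsqNN u : NNReal) : ℝ) ≤ 1 / 4 := by
    rw [hvar, hr]
    have : 2 * (κ * (m / (16 * κ * nsq z))) * (2 / m * nsq z * nsq u) = nsq u / 4 := by
      field_simp; ring
    rw [this]; linarith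
  have hexp := lintegral_exp_sq (2 / (m : NNReal) * nsqNN z * nsqNN u) (κ * r)
    (lt_of_le_of_lt hlt (by norm_num))
  rw [← map_linear_gaussian, ← map_mulVec_gaussMat, Measure.map_map (by fun_prop)
    (by unfold mulVec; fun_prop), lintegral_map (by fun_prop) (by unfold mulVec; fun_prop)] at hexp
  have h2 : (√(1 - 2 * (κ * r) * ((2 / (m : NNReal) * nsqNN z * nsqNN u : NNReal) : ℝ)))⁻¹ ≤ 2 := by
    rw [inv_le_comm₀ (by apply Real.sqrt_pos.2; linarith) (by norm_num)]
    apply Real.le_sqrt_of_sq_le; linarith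
  have hpt : ∀ M : Fin m → Fin m → ℝ,
      ENNReal.ofReal (((∑ k, mulVec M z k * u k) ^ 2) ^ κ)
      ≤ ENNReal.ofReal (Real.exp (κ * r * (∑ k, mulVec M z k * u k) ^ 2))
        * ENNReal.ofReal (r⁻¹ ^ κ) := by
    intro M
    rw [← ENNReal.ofReal_mul (Real.exp_pos _).le]
    apply ENNReal.ofReal_le_ofReal
    have h1 := pow_le_exp_sub (y := r * (∑ k, mulVec M z k * u k) ^ 2) (by positivity) κ
    rw [mul_pow] at h1
    rw [inv_pow, ← div_eq_mul_inv, le_div_iff₀ (by positivity), mul_comm]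
    refine h1.trans (Real.exp_le_exp.2 ?_)
    nlinarith
  calc _ ≤ _ := lintegral_mono hpt
    _ ≤ ENNReal.ofReal 2 * ENNReal.ofReal (r⁻¹ ^ κ) := by
        rw [lintegral_mul_const' _ _ ENNReal.ofReal_ne_top]
        gcongr
        exact hexp.trans_le (ENNReal.ofReal_le_ofReal h2)
    _ = _ := by
        rw [← ENNReal.ofReal_mul (by norm_num), ← ENNReal.ofReal_mul (by positivity), mul_assoc,
          ← mul_pow]
        congr 3
        rw [hr]; field_simp

/-- For `h ≠ 0`, the vector `M h` has a zero coordinate with probability `0`, and has no positive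
coordinate with probability `2⁻ᵐ`. -/
lemma degenerate_prob {m q : ℕ} (hm : 0 < m) (h : Fin q → ℝ) (hh : h ≠ 0) :
    gaussMat m q (2 / m) {M | (∃ k, mulVec M h k = 0) ∨ ∀ k, mulVec M h k ≤ 0}
      ≤ ENNReal.ofReal ((1 / 2) ^ m) := by
  set s : NNReal := 2 / m * nsqNN h with hs
  have hs0 : s ≠ 0 := by
    have h1 : nsqNN h ≠ 0 := by
      intro h0
      have : nsq h = 0 := congrArg NNReal.toReal h0
      exact hh (nsq_eq_zero this)
    have h2 : (m : NNReal) ≠ 0 := by positivity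
    positivity
  have := nullSingletonClass_gaussianReal (μ := 0) hs0
  have hmeas : Measurable fun M : Fin m → Fin q → ℝ => mulVec M h := by unfold mulVec; fun_prop
  have hlaw := map_mulVec_gaussMat (p := m) (2 / (m : NNReal)) h
  rw [← hs] at hlaw
  have hhalf : gaussianReal 0 s (Set.Iic 0) = ENNReal.ofReal (1 / 2) := by
    have h1 : gaussianReal 0 s (Set.Iic 0) = gaussianReal 0 s (Set.Ioi 0) := by
      rw [← measure_congr (Ioi_ae_eq_Ici (a := (0 : ℝ)) (μ := gaussianReal 0 s)).symm]
      conv_rhs => rw [← neg_zero (G := ℝ), ← gaussianReal_map_neg,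
        Measure.map_apply measurable_neg measurableSet_Ici]
      simp
    have h2 : gaussianReal 0 s (Set.Iic 0) + gaussianReal 0 s (Set.Ioi 0) = 1 := by
      rw [← measure_union (Set.Iic_disjoint_Ioi le_rfl) measurableSet_Ioi, Set.Iic_union_Ioi,
        measure_univ]
    rw [← h1, ← mul_two] at h2
    rw [one_div, ENNReal.ofReal_inv_of_pos two_pos]
    simpa using ENNReal.eq_inv_of_mul_eq_one_left h2
  have hset : {M : Fin m → Fin q → ℝ | (∃ k, mulVec M h k = 0) ∨ ∀ k, mulVec M h k ≤ 0}
      = (⋃ k, {M | mulVec M h k = 0}) ∪ {M | ∀ k, mulVec M h k ≤ 0} := by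
    ext M; simp
  rw [hset]
  refine (measure_union_le _ _).trans ?_
  have hz : gaussMat m q (2 / m) (⋃ k, {M | mulVec M h k = 0}) = 0 := by
    rw [measure_iUnion_null_iff]
    intro k
    have h1 : {M : Fin m → Fin q → ℝ | mulVec M h k = 0}
        = (fun M => mulVec M h) ⁻¹' ((fun y : Fin m → ℝ => y k) ⁻¹' {0}) := rfl
    rw [h1, ← Measure.map_apply hmeas (measurable_pi_apply k (measurableSet_singleton 0)), hlaw]
    rw [(measurePreserving_eval (fun _ : Fin m => gaussianReal 0 s) k).measure_preimage
      (measurableSet_singleton (0 : ℝ)).nullMeasurableSet]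
    simp
  have hall : gaussMat m q (2 / m) {M | ∀ k, mulVec M h k ≤ 0} = ENNReal.ofReal ((1 / 2) ^ m) := by
    have h1 : {M : Fin m → Fin q → ℝ | ∀ k, mulVec M h k ≤ 0}
        = (fun M => mulVec M h) ⁻¹' (Set.univ.pi fun _ => Set.Iic 0) := by
      ext M
      simp only [Set.mem_ofPred_eq, Set.mem_preimage, Set.mem_univ_pi, Set.mem_Iic]
    rw [h1, ← Measure.map_apply hmeas (MeasurableSet.univ_pi fun _ => measurableSet_Iic), hlaw,
      Measure.pi_pi]
    simp only [hhalf, Finset.prod_const, Finset.card_univ, Fintype.card_fin]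
    rw [ENNReal.ofReal_pow (by norm_num)]
  rw [hz, hall, zero_add]

/-! ### Matrix-vector algebra -/

lemma mulVec_mmul {p q r : ℕ} (M : Fin p → Fin q → ℝ) (N : Fin q → Fin r → ℝ) (v : Fin r → ℝ) :
    mulVec (mmul M N) v = mulVec M (mulVec N v) := by
  funext i
  simp only [mulVec, mmul, Finset.sum_mul, Finset.mul_sum]
  rw [Finset.sum_comm]
  exact Finset.sum_congr rfl fun j _ => Finset.sum_congr rfl fun k _ => by ring

lemma mulVec_idMat {p : ℕ} (v : Fin p → ℝ) : mulVec (idMat p) v = v := by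
  funext i; simp [mulVec, idMat]

lemma mulVec_diagMat {p : ℕ} (dg v : Fin p → ℝ) : mulVec (diagMat dg) v = fun k => dg k * v k := by
  funext i; simp [mulVec, diagMat]

/-! ### The gated process -/

/-- The vectors `D_b W_b ⋯ D_a W_a v`, computed with the strict gates `gate` in place of the sign
matrices `D_ℓ`. -/
def zvec {𝔡 m L : ℕ} (A : Fin m → Fin 𝔡 → ℝ) (W : Fin L → Fin m → Fin m → ℝ) (x : Fin 𝔡 → ℝ)
    (v : Fin m → ℝ) (a : ℕ) : ℕ → Fin m → ℝ
  | 0 => v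
  | b + 1 =>
      if a ≤ b + 1 ∧ b + 1 ≤ L then
        gate (gseq A W x (b + 1)) (mulVec (Wat W (b + 1)) (zvec A W x v a b))
      else zvec A W x v a b

/-- The pre-activation `g` has a zero coordinate or no positive coordinate. -/
def Degen {p : ℕ} (g : Fin p → ℝ) : Prop := (∃ k, g k = 0) ∨ ∀ k, g k ≤ 0


/-- Off the degenerate event the strict gates agree with the sign matrices. -/
lemma mulVec_prodDW (A : Fin m → Fin 𝔡 → ℝ) (W : Fin L → Fin m → Fin m → ℝ) (x : Fin 𝔡 → ℝ)
    (hnd : ∀ ℓ ≤ L, ¬ Degen (gseq A W x ℓ)) (v : Fin m → ℝ) (a b : ℕ) :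
    mulVec (prodDW A W x a b) v = zvec A W x v a b := by
  induction b with
  | zero => exact mulVec_idMat v
  | succ b ih =>
    unfold prodDW at ih ⊢
    rw [chainProd, zvec]
    split_ifs with h
    · rw [mulVec_mmul, mulVec_mmul, mulVec_diagMat, ih]
      funext k
      have hk : gseq A W x (b + 1) k ≠ 0 := fun h0 => hnd _ h.2 (Or.inl ⟨k, h0⟩)
      simp only [signOf, gate]
      rcases lt_or_gt_of_ne hk with h1 | h1
      · rw [if_neg (not_le.2 h1), if_neg (not_lt.2 h1.le), zero_mul]
      · rw [if_pos h1.le, if_pos h1, one_mul]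
    · exact ih

lemma hseq_eq_relu (A : Fin m → Fin 𝔡 → ℝ) (W : Fin L → Fin m → Fin m → ℝ) (x : Fin 𝔡 → ℝ)
    {ℓ : ℕ} (hℓ : ℓ ≤ L) : hseq A W x ℓ = relu (gseq A W x ℓ) := by
  cases ℓ with
  | zero => rfl
  | succ ℓ => rw [hseq, if_pos hℓ, gseq]

lemma hseq_ne_zero (A : Fin m → Fin 𝔡 → ℝ) (W : Fin L → Fin m → Fin m → ℝ) (x : Fin 𝔡 → ℝ)
    {ℓ : ℕ} (hℓ : ℓ ≤ L) (h : ¬ Degen (gseq A W x ℓ)) : hseq A W x ℓ ≠ 0 := by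
  intro h0
  rw [hseq_eq_relu A W x hℓ] at h0
  refine h (Or.inr fun k => ?_)
  have := congrFun h0 k
  simpa [relu] using this

/-! Redrawing `W k`, the weight matrix of layer `k + 1`, leaves all earlier layers unchanged. -/

lemma Wat_update_self (W : Fin L → Fin m → Fin m → ℝ) (k : Fin L) (M : Fin m → Fin m → ℝ) :
    Wat (Function.update W k M) (k + 1) = M := by
  unfold Wat
  rw [dif_pos ⟨by omega, k.2⟩]
  have : (⟨(k : ℕ) + 1 - 1, by omega⟩ : Fin L) = k := by ext; simp
  rw [this, Function.update_self]

lemma Wat_update_of_le (W : Fin L → Fin m → Fin m → ℝ) (k : Fin L) (M : Fin m → Fin m → ℝ)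
    {ℓ : ℕ} (h : ℓ ≤ k) : Wat (Function.update W k M) ℓ = Wat W ℓ := by
  unfold Wat
  split_ifs with h1
  · rw [Function.update_of_ne]
    intro h2
    have := congrArg Fin.val h2
    simp at this; omega
  · rfl

lemma hseq_update (A : Fin m → Fin 𝔡 → ℝ) (W : Fin L → Fin m → Fin m → ℝ) (x : Fin 𝔡 → ℝ)
    (k : Fin L) (M : Fin m → Fin m → ℝ) {ℓ : ℕ} (h : ℓ ≤ k) :
    hseq A (Function.update W k M) x ℓ = hseq A W x ℓ := by
  induction ℓ with
  | zero => rfl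
  | succ ℓ ih => rw [hseq, hseq, Wat_update_of_le _ _ _ h, ih (by omega)]

lemma gseq_update (A : Fin m → Fin 𝔡 → ℝ) (W : Fin L → Fin m → Fin m → ℝ) (x : Fin 𝔡 → ℝ)
    (k : Fin L) (M : Fin m → Fin m → ℝ) {ℓ : ℕ} (h : ℓ ≤ k) :
    gseq A (Function.update W k M) x ℓ = gseq A W x ℓ := by
  cases ℓ with
  | zero => rfl
  | succ ℓ => rw [gseq, gseq, Wat_update_of_le _ _ _ h, hseq_update A W x k M (by omega)]

lemma gseq_update_self (A : Fin m → Fin 𝔡 → ℝ) (W : Fin L → Fin m → Fin m → ℝ) (x : Fin 𝔡 → ℝ)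
    (k : Fin L) (M : Fin m → Fin m → ℝ) :
    gseq A (Function.update W k M) x (k + 1) = mulVec M (hseq A W x k) := by
  rw [gseq, Wat_update_self, hseq_update A W x k M le_rfl]

lemma zvec_update (A : Fin m → Fin 𝔡 → ℝ) (W : Fin L → Fin m → Fin m → ℝ) (x : Fin 𝔡 → ℝ)
    (v : Fin m → ℝ) (a : ℕ) (k : Fin L) (M : Fin m → Fin m → ℝ) {ℓ : ℕ} (h : ℓ ≤ k) :
    zvec A (Function.update W k M) x v a ℓ = zvec A W x v a ℓ := by
  induction ℓ with
  | zero => rfl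
  | succ ℓ ih =>
    rw [zvec, zvec, Wat_update_of_le _ _ _ h, ih (by omega), gseq_update A W x k M h]

/-! ### Measurability -/

lemma measurable_mulVec {Ω : Type*} [MeasurableSpace Ω] {p q : ℕ} {f : Ω → Fin p → Fin q → ℝ}
    {g : Ω → Fin q → ℝ} (hf : Measurable f) (hg : Measurable g) :
    Measurable fun ω => mulVec (f ω) (g ω) := by
  unfold mulVec
  fun_prop

lemma measurable_Wat (ℓ : ℕ) : Measurable fun W : Fin L → Fin m → Fin m → ℝ => Wat W ℓ := by
  unfold Wat
  split_ifs
  · exact measurable_pi_apply _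
  · exact measurable_const

lemma measurable_hseq (x : Fin 𝔡 → ℝ) (ℓ : ℕ) :
    Measurable fun z : (Fin m → Fin 𝔡 → ℝ) × (Fin L → Fin m → Fin m → ℝ) =>
      hseq z.1 z.2 x ℓ := by
  have hrelu : Measurable (relu : (Fin m → ℝ) → Fin m → ℝ) := by unfold relu; fun_prop
  induction ℓ with
  | zero => exact hrelu.comp (measurable_mulVec measurable_fst measurable_const)
  | succ ℓ ih =>
    simp only [hseq]
    split_ifs
    · exact hrelu.comp (measurable_mulVec ((measurable_Wat _).comp measurable_snd) ih)
    · exact ih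

lemma measurable_gseq (x : Fin 𝔡 → ℝ) (ℓ : ℕ) :
    Measurable fun z : (Fin m → Fin 𝔡 → ℝ) × (Fin L → Fin m → Fin m → ℝ) =>
      gseq z.1 z.2 x ℓ := by
  cases ℓ with
  | zero => exact measurable_mulVec measurable_fst measurable_const
  | succ ℓ =>
    exact measurable_mulVec ((measurable_Wat _).comp measurable_snd) (measurable_hseq x ℓ)

lemma measurable_zvec (x : Fin 𝔡 → ℝ) (v : Fin m → ℝ) (a ℓ : ℕ) :
    Measurable fun z : (Fin m → Fin 𝔡 → ℝ) × (Fin L → Fin m → Fin m → ℝ) =>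
      zvec z.1 z.2 x v a ℓ := by
  induction ℓ with
  | zero => exact measurable_const
  | succ ℓ ih =>
    simp only [zvec]
    split_ifs
    · have h1 := measurable_gseq (m := m) (L := L) x (ℓ + 1)
      have h2 := measurable_mulVec ((measurable_Wat (L := L) (m := m) (ℓ + 1)).comp
        measurable_snd) ih
      refine measurable_pi_lambda _ fun k => ?_
      exact Measurable.ite (measurableSet_lt measurable_const ((measurable_pi_apply k).comp h1))
        ((measurable_pi_apply k).comp h2) measurable_const
    · exact ih

lemma measurable_nsq {p : ℕ} : Measurable (nsq : (Fin p → ℝ) → ℝ) := by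
  unfold nsq; fun_prop

lemma measurableSet_degen (x : Fin 𝔡 → ℝ) (ℓ : ℕ) :
    MeasurableSet {z : (Fin m → Fin 𝔡 → ℝ) × (Fin L → Fin m → Fin m → ℝ) |
      Degen (gseq z.1 z.2 x ℓ)} := by
  have h1 : ∀ k, Measurable fun z : (Fin m → Fin 𝔡 → ℝ) × (Fin L → Fin m → Fin m → ℝ) =>
      gseq z.1 z.2 x ℓ k := fun k => (measurable_pi_apply k).comp (measurable_gseq x ℓ)
  have h2 : {z : (Fin m → Fin 𝔡 → ℝ) × (Fin L → Fin m → Fin m → ℝ) |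
      Degen (gseq z.1 z.2 x ℓ)} = (⋃ k, {z | gseq z.1 z.2 x ℓ k = 0}) ∪
        ⋂ k, {z | gseq z.1 z.2 x ℓ k ≤ 0} := by
    ext z; simp [Degen]
  rw [h2]
  exact (MeasurableSet.iUnion fun k => measurableSet_eq_fun (h1 k) measurable_const).union
    (MeasurableSet.iInter fun k => measurableSet_le (h1 k) measurable_const)

/-! ### Redrawing one layer -/

/-- Redrawing one coordinate of a product probability measure does not change expectations. -/
lemma lintegral_pi_resample {β : Type*} [MeasurableSpace β] (ν : Measure β)
    [IsProbabilityMeasure ν] (k : Fin L) (f : (Fin L → β) → ENNReal) (hf : Measurable f) :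
    ∫⁻ W, f W ∂(Measure.pi fun _ : Fin L => ν)
      = ∫⁻ W, ∫⁻ M, f (Function.update W k M) ∂ν ∂(Measure.pi fun _ : Fin L => ν) := by
  set G : (Fin L → β) → ENNReal := fun W => ∫⁻ M, f (Function.update W k M) ∂ν with hG
  have hGm : Measurable G := by
    have : G = ∫⋯∫⁻_{k}, f ∂(fun _ : Fin L => ν) := by rw [lmarginal_singleton]
    rw [this]; exact hf.lmarginal _
  rcases isEmpty_or_nonempty β with hE | hE
  · exact absurd (IsProbabilityMeasure.ne_zero ν) (by simp [Measure.eq_zero_of_isEmpty ν])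
  obtain ⟨b⟩ := hE
  rw [lintegral_eq_lmarginal_univ (fun _ => b), lintegral_eq_lmarginal_univ (fun _ => b),
    lmarginal_erase' f hf (Finset.mem_univ k)]
  change _ = (∫⋯∫⁻_Finset.univ, G ∂fun _ => ν) _
  rw [lmarginal_erase' G hGm (Finset.mem_univ k)]
  simp [hG]

lemma lintegral_resample (k : Fin L)
    (f : (Fin m → Fin 𝔡 → ℝ) × (Fin L → Fin m → Fin m → ℝ) → ENNReal) (hf : Measurable f) :
    ∫⁻ z, f z ∂initAW 𝔡 m L
      = ∫⁻ z, ∫⁻ M, f (z.1, Function.update z.2 k M) ∂gaussMat m m (2 / m) ∂initAW 𝔡 m L := by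
  unfold initAW
  have hm : Measurable fun p : ((Fin m → Fin 𝔡 → ℝ) × (Fin L → Fin m → Fin m → ℝ)) ×
      (Fin m → Fin m → ℝ) => f (p.1.1, Function.update p.1.2 k p.2) := by
    refine hf.comp ((measurable_fst.comp measurable_fst).prodMk ?_)
    refine measurable_pi_lambda _ fun j => ?_
    by_cases hj : j = k
    · subst hj; simpa using measurable_snd
    · simp only [Function.update_of_ne hj]
      exact (measurable_pi_apply j).comp (measurable_snd.comp measurable_fst)
  rw [lintegral_prod _ hf.aemeasurable, lintegral_prod _ hm.lintegral_prod_right'.aemeasurable]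
  refine lintegral_congr fun A => ?_
  exact lintegral_pi_resample _ k (fun W => f (A, W)) (hf.comp (by fun_prop))

lemma lintegral_resample_le (k : Fin L)
    (f g : (Fin m → Fin 𝔡 → ℝ) × (Fin L → Fin m → Fin m → ℝ) → ENNReal) (hf : Measurable f)
    (K : ENNReal) (hK : K ≠ ⊤)
    (h : ∀ z, ∫⁻ M, f (z.1, Function.update z.2 k M) ∂gaussMat m m (2 / m) ≤ K * g z) :
    ∫⁻ z, f z ∂initAW 𝔡 m L ≤ K * ∫⁻ z, g z ∂initAW 𝔡 m L := by
  rw [lintegral_resample k f hf, ← lintegral_const_mul' _ _ hK]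
  exact lintegral_mono h

/-! ### Moments and tails through the network -/

/-- The moment growth factor `exp (6 κ² / m)` of one layer. -/
def growth (κ m : ℕ) : ENNReal := ENNReal.ofReal (Real.exp (6 * κ ^ 2 / m))

lemma one_le_growth (κ m : ℕ) : 1 ≤ growth κ m := by
  rw [growth, ← ENNReal.ofReal_one]
  exact ENNReal.ofReal_le_ofReal (Real.one_le_exp (by positivity))

lemma zvec_moment (hm : 0 < m) (κ : ℕ) (hκ0 : 0 < κ) (hκ : 16 * κ ≤ m)
    (x : Fin 𝔡 → ℝ) (v : Fin m → ℝ) (a b : ℕ) :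
    ∫⁻ z, ENNReal.ofReal (nsq (zvec z.1 z.2 x v a b) ^ κ) ∂initAW 𝔡 m L
      ≤ growth κ m ^ b * ENNReal.ofReal (nsq v ^ κ) := by
  induction b with
  | zero => simp [zvec]
  | succ b ih =>
    by_cases h : a ≤ b + 1 ∧ b + 1 ≤ L
    · have h1 := lintegral_resample_le (𝔡 := 𝔡) (m := m) (⟨b, h.2⟩ : Fin L)
        (fun z => ENNReal.ofReal (nsq (zvec z.1 z.2 x v a (b + 1)) ^ κ))
        (fun z => ENNReal.ofReal (nsq (zvec z.1 z.2 x v a b) ^ κ))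
        (((measurable_nsq.comp (measurable_zvec x v a (b + 1))).pow_const κ).ennreal_ofReal)
        (growth κ m) ENNReal.ofReal_ne_top ?_
      · refine h1.trans ?_
        rw [pow_succ', mul_assoc]
        gcongr
      · intro z
        refine (lintegral_congr fun M => ?_).trans_le
          (gate_moment hm κ hκ0 hκ (hseq z.1 z.2 x b) (zvec z.1 z.2 x v a b))
        simp only [zvec]
        rw [if_pos h, zvec_update z.1 z.2 x v a ⟨b, h.2⟩ M le_rfl]
        rw [gseq_update_self z.1 z.2 x ⟨b, h.2⟩ M, Wat_update_self z.2 ⟨b, h.2⟩ M]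
    · simp only [zvec, if_neg h]
      refine ih.trans ?_
      gcongr
      · exact one_le_growth κ m
      · omega

/-- Moment bound for `Q (W_{k+1} z_k)`, where the functional `Q` of a Gaussian matrix applied to a
fixed vector has controlled moments. -/
lemma final_moment (hm : 0 < m) (κ : ℕ) (hκ0 : 0 < κ) (hκ : 16 * κ ≤ m)
    (x : Fin 𝔡 → ℝ) (v : Fin m → ℝ) (a : ℕ) (k : Fin L) (Q : (Fin m → ℝ) → ℝ)
    (hQm : Measurable Q) (K : ℝ)
    (hQ : ∀ z : Fin m → ℝ, ∫⁻ M, ENNReal.ofReal (Q (mulVec M z) ^ κ) ∂gaussMat m m (2 / m)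
      ≤ ENNReal.ofReal K * ENNReal.ofReal (nsq z ^ κ)) :
    ∫⁻ z, ENNReal.ofReal (Q (mulVec (Wat z.2 (k + 1)) (zvec z.1 z.2 x v a k)) ^ κ) ∂initAW 𝔡 m L
      ≤ ENNReal.ofReal K * (growth κ m ^ (k : ℕ) * ENNReal.ofReal (nsq v ^ κ)) := by
  refine (lintegral_resample_le (𝔡 := 𝔡) (m := m) k _
    (fun z => ENNReal.ofReal (nsq (zvec z.1 z.2 x v a k) ^ κ)) ?_ _ ENNReal.ofReal_ne_top ?_).trans
    (by gcongr; exact zvec_moment hm κ hκ0 hκ x v a k)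
  · exact ((hQm.comp (measurable_mulVec ((measurable_Wat _).comp measurable_snd)
      (measurable_zvec x v a k))).pow_const κ).ennreal_ofReal
  · intro z
    refine (lintegral_congr fun M => ?_).trans_le (hQ (zvec z.1 z.2 x v a k))
    simp only
    rw [zvec_update z.1 z.2 x v a k M le_rfl, Wat_update_self z.2 k M]

lemma growth_pow_le (hm : 0 < m) (κ : ℕ) (hκ : 60 * κ * L ≤ m) {b : ℕ} (hb : b ≤ L) :
    growth κ m ^ b ≤ ENNReal.ofReal (Real.exp (κ / 10)) := by
  rw [growth, ← ENNReal.ofReal_pow (Real.exp_pos _).le, ← Real.exp_nat_mul]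
  apply ENNReal.ofReal_le_ofReal
  apply Real.exp_le_exp.2
  have hm' : (0 : ℝ) < m := by exact_mod_cast hm
  have h1 : (60 : ℝ) * κ * L ≤ m := by exact_mod_cast hκ
  have h2 : (b : ℝ) ≤ L := by exact_mod_cast hb
  rw [← mul_div_assoc, div_le_div_iff₀ hm' (by norm_num)]
  have hκ0 : (0 : ℝ) ≤ κ := by positivity
  nlinarith [mul_le_mul_of_nonneg_left h2 (mul_nonneg hκ0 hκ0), mul_le_mul_of_nonneg_left h1 hκ0]

lemma two_thirds_pow_le (κ : ℕ) : (2 / 3 : ℝ) ^ κ ≤ Real.exp (-(κ / 3)) := by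
  have h : (2 / 3 : ℝ) ≤ Real.exp (-(1 / 3)) := by
    have := Real.add_one_le_exp (-(1 / 3 : ℝ)); linarith
  calc (2 / 3 : ℝ) ^ κ ≤ Real.exp (-(1 / 3)) ^ κ := by gcongr
    _ = _ := by rw [← Real.exp_nat_mul]; congr 1; ring

/-- Markov's inequality for the `κ`-th moment, with the constants arranged so that the failure
probability is at most `exp (-κ / 8)`. -/
lemma markov_tail (hm : 0 < m) (κ : ℕ) (hκ0 : 0 < κ) (hL : 0 < L) (hκ : 60 * κ * L ≤ m)
    (x : Fin 𝔡 → ℝ) (v : Fin m → ℝ) (hv : nsq v ≤ 1) (a : ℕ) (k : Fin L) (Q : (Fin m → ℝ) → ℝ)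
    (hQm : Measurable Q) (K s : ℝ) (hs : 0 < s) (hK0 : 0 ≤ K)
    (hK : K ≤ (2 / 3 * s) ^ κ * Real.exp (κ / 10))
    (hQ : ∀ z : Fin m → ℝ, ∫⁻ M, ENNReal.ofReal (Q (mulVec M z) ^ κ) ∂gaussMat m m (2 / m)
      ≤ ENNReal.ofReal K * ENNReal.ofReal (nsq z ^ κ)) :
    initAW 𝔡 m L {z | s < Q (mulVec (Wat z.2 (k + 1)) (zvec z.1 z.2 x v a k))}
      ≤ ENNReal.ofReal (Real.exp (-(κ / 8))) := by
  have h16 : 16 * κ ≤ m := by nlinarith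
  have hmom := final_moment hm κ hκ0 h16 x v a k Q hQm K hQ
  have hsub : {z : (Fin m → Fin 𝔡 → ℝ) × (Fin L → Fin m → Fin m → ℝ) |
      s < Q (mulVec (Wat z.2 (k + 1)) (zvec z.1 z.2 x v a k))} ⊆
      {z | ENNReal.ofReal (s ^ κ) ≤
        ENNReal.ofReal (Q (mulVec (Wat z.2 (k + 1)) (zvec z.1 z.2 x v a k)) ^ κ)} := by
    intro z hz
    exact ENNReal.ofReal_le_ofReal (pow_le_pow_left₀ hs.le (le_of_lt hz) κ)
  refine (measure_mono hsub).trans ?_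
  refine (meas_ge_le_lintegral_div ?_ (by simpa using pow_pos hs κ) ENNReal.ofReal_ne_top).trans ?_
  · exact (((hQm.comp (measurable_mulVec ((measurable_Wat _).comp measurable_snd)
      (measurable_zvec x v a k))).pow_const κ).ennreal_ofReal).aemeasurable
  apply ENNReal.div_le_of_le_mul
  refine hmom.trans ?_
  calc ENNReal.ofReal K * (growth κ m ^ (k : ℕ) * ENNReal.ofReal (nsq v ^ κ))
      ≤ ENNReal.ofReal K * (ENNReal.ofReal (Real.exp (κ / 10)) * ENNReal.ofReal 1) := by
        gcongr
        · exact growth_pow_le hm κ hκ k.2.le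
        · exact pow_le_one₀ (nsq_nonneg v) hv
    _ ≤ _ := by
        rw [← ENNReal.ofReal_mul (Real.exp_pos _).le, ← ENNReal.ofReal_mul hK0,
          ← ENNReal.ofReal_mul (Real.exp_pos _).le, mul_one]
        apply ENNReal.ofReal_le_ofReal
        calc K * Real.exp (κ / 10) ≤ (2 / 3 * s) ^ κ * Real.exp (κ / 10) * Real.exp (κ / 10) := by
              gcongr
          _ = (2 / 3) ^ κ * s ^ κ * Real.exp (κ / 10) * Real.exp (κ / 10) := by rw [mul_pow]
          _ ≤ Real.exp (-(κ / 3)) * s ^ κ * Real.exp (κ / 10) * Real.exp (κ / 10) := by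
              gcongr; exact two_thirds_pow_le κ
          _ = Real.exp (-(κ / 3)) * Real.exp (κ / 10) * Real.exp (κ / 10) * s ^ κ := by ring
          _ ≤ _ := by
              rw [← Real.exp_add, ← Real.exp_add]
              have hκ' : (0 : ℝ) ≤ κ := by positivity
              gcongr
              linarith

lemma norm_tail (hm : 0 < m) (κ : ℕ) (hκ0 : 0 < κ) (hL : 0 < L) (hκ : 60 * κ * L ≤ m)
    (x : Fin 𝔡 → ℝ) (v : Fin m → ℝ) (hv : nsq v ≤ 1) (a : ℕ) (k : Fin L) :
    initAW 𝔡 m L {z | 3 < nsq (mulVec (Wat z.2 (k + 1)) (zvec z.1 z.2 x v a k))}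
      ≤ ENNReal.ofReal (Real.exp (-(κ / 8))) := by
  have h16 : 16 * κ ≤ m := by nlinarith
  refine markov_tail hm κ hκ0 hL hκ x v hv a k nsq measurable_nsq
    (2 ^ κ * Real.exp (6 * κ ^ 2 / m)) 3 (by norm_num) (by positivity) ?_
    (full_moment hm κ hκ0 h16)
  have hm' : (0 : ℝ) < m := by exact_mod_cast hm
  have h60 : (60 : ℝ) * κ ≤ m := by
    have : 60 * κ ≤ m := by nlinarith
    exact_mod_cast this
  have h3 : (2 / 3 * 3 : ℝ) = 2 := by norm_num
  rw [h3]
  gcongr ?_ * Real.exp ?_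
  rw [div_le_div_iff₀ hm' (by norm_num)]
  have hκ' : (0 : ℝ) ≤ κ := by positivity
  nlinarith

lemma bilin_tail (hm : 0 < m) (κ : ℕ) (hκ0 : 0 < κ) (hL : 0 < L) (hκ : 60 * κ * L ≤ m)
    (x : Fin 𝔡 → ℝ) (v u : Fin m → ℝ) (hv : nsq v ≤ 1) (hu : nsq u ≤ 1) (a : ℕ) (k : Fin L) :
    initAW 𝔡 m L {z | 1 / (L : ℝ) <
        (∑ j, mulVec (Wat z.2 (k + 1)) (zvec z.1 z.2 x v a k) j * u j) ^ 2}
      ≤ ENNReal.ofReal (Real.exp (-(κ / 8))) := by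
  have hm' : (0 : ℝ) < m := by exact_mod_cast hm
  have hL' : (0 : ℝ) < L := by exact_mod_cast hL
  have h1 : (60 : ℝ) * κ * L ≤ m := by exact_mod_cast hκ
  refine markov_tail hm κ hκ0 hL hκ x v hv a k (fun y => (∑ j, y j * u j) ^ 2) (by fun_prop)
    (2 * (16 * κ / m) ^ κ) (1 / L) (by positivity) (by positivity) ?_
    (fun z => bilin_moment hm κ hκ0 u z hu)
  calc 2 * (16 * κ / m : ℝ) ^ κ ≤ 2 ^ κ * (16 * κ / m) ^ κ := by
        gcongr
        exact le_self_pow₀ (by norm_num) hκ0.ne'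
    _ = (2 * (16 * κ / m)) ^ κ := by rw [mul_pow]
    _ ≤ (2 / 3 * (1 / L)) ^ κ := by
        refine pow_le_pow_left₀ (by positivity) ?_ κ
        rw [← mul_div_assoc, ← mul_div_assoc, div_le_div_iff₀ hm' hL']
        nlinarith
    _ ≤ _ := by
        apply le_mul_of_one_le_right (by positivity)
        exact Real.one_le_exp (by positivity)

/-- Conditionally on the earlier layers, a nondegenerate layer is followed by a degenerate one with
probability at most `2⁻ᵐ`. -/
lemma degen_step (hm : 0 < m) (x : Fin 𝔡 → ℝ) (k : Fin L) :
    initAW 𝔡 m L {z | Degen (gseq z.1 z.2 x (k + 1)) ∧ ¬ Degen (gseq z.1 z.2 x k)}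
      ≤ ENNReal.ofReal ((1 / 2) ^ m) := by
  set S : Set ((Fin m → Fin 𝔡 → ℝ) × (Fin L → Fin m → Fin m → ℝ)) :=
    {z | Degen (gseq z.1 z.2 x (k + 1)) ∧ ¬ Degen (gseq z.1 z.2 x k)} with hS
  have hSm : MeasurableSet S :=
    (measurableSet_degen x (k + 1)).inter (measurableSet_degen x k).compl
  rw [← lintegral_indicator_one hSm]
  refine (lintegral_resample_le k _ (fun _ => 1) (measurable_one.indicator hSm)
    (ENNReal.ofReal ((1 / 2) ^ m)) ENNReal.ofReal_ne_top ?_).trans (by simp)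
  intro z
  rw [mul_one]
  by_cases hz : Degen (gseq z.1 z.2 x k)
  · have : ∀ M, S.indicator (1 : (Fin m → Fin 𝔡 → ℝ) × (Fin L → Fin m → Fin m → ℝ) → ENNReal)
      (z.1, Function.update z.2 k M) = 0 := by
      intro M
      apply Set.indicator_of_notMem
      rintro ⟨-, h2⟩
      rw [gseq_update z.1 z.2 x k M le_rfl] at h2
      exact h2 hz
    rw [lintegral_congr this]
    simp only [lintegral_zero, zero_le]
  · have hh := hseq_ne_zero z.1 z.2 x k.2.le hz
    refine le_trans ?_ (degenerate_prob hm (hseq z.1 z.2 x k) hh)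
    refine le_trans (lintegral_mono (g := Set.indicator
      {M : Fin m → Fin m → ℝ | (∃ j, mulVec M (hseq z.1 z.2 x k) j = 0) ∨
        ∀ j, mulVec M (hseq z.1 z.2 x k) j ≤ 0} 1) ?_) (lintegral_indicator_one_le _)
    intro M
    by_cases hM : (z.1, Function.update z.2 k M) ∈ S
    · have h1 := hM.1
      simp only [gseq_update_self z.1 z.2 x k M] at h1
      have h2 : M ∈ {M : Fin m → Fin m → ℝ | (∃ j, mulVec M (hseq z.1 z.2 x k) j = 0) ∨
        ∀ j, mulVec M (hseq z.1 z.2 x k) j ≤ 0} := h1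
      beta_reduce
      rw [Set.indicator_of_mem hM, Set.indicator_of_mem h2]
      simp
    · beta_reduce
      rw [Set.indicator_of_notMem hM]
      exact zero_le

lemma degen_prob (hm : 0 < m) (x : Fin 𝔡 → ℝ) (hx : x ≠ 0) (K : ℕ) (hK : K ≤ L) :
    initAW 𝔡 m L {z | ∃ ℓ ≤ K, Degen (gseq z.1 z.2 x ℓ)}
      ≤ (K + 1 : ℕ) * ENNReal.ofReal ((1 / 2) ^ m) := by
  induction K with
  | zero =>
    have h1 : {z : (Fin m → Fin 𝔡 → ℝ) × (Fin L → Fin m → Fin m → ℝ) |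
        ∃ ℓ ≤ 0, Degen (gseq z.1 z.2 x ℓ)} = {A | Degen (mulVec A x)} ×ˢ Set.univ := by
      ext z; simp [gseq]
    rw [h1, initAW, Measure.prod_prod]
    have := degenerate_prob hm x hx
    simp only [measure_univ, mul_one, zero_add, Nat.cast_one, one_mul]
    exact this
  | succ K ih =>
    have h1 : {z : (Fin m → Fin 𝔡 → ℝ) × (Fin L → Fin m → Fin m → ℝ) |
        ∃ ℓ ≤ K + 1, Degen (gseq z.1 z.2 x ℓ)} ⊆ {z | ∃ ℓ ≤ K, Degen (gseq z.1 z.2 x ℓ)} ∪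
        {z | Degen (gseq z.1 z.2 x (K + 1)) ∧ ¬ Degen (gseq z.1 z.2 x K)} := by
      rintro z ⟨ℓ, hℓ, h⟩
      by_cases hz : ∃ ℓ ≤ K, Degen (gseq z.1 z.2 x ℓ)
      · exact Or.inl hz
      · push Not at hz
        refine Or.inr ⟨?_, hz K le_rfl⟩
        rcases Nat.lt_or_ge K ℓ with h2 | h2
        · have : ℓ = K + 1 := by omega
          rwa [← this]
        · exact absurd h (hz ℓ h2)
    refine (measure_mono h1).trans ((measure_union_le _ _).trans ?_)
    refine (add_le_add (ih (by omega)) (degen_step hm x ⟨K, by omega⟩)).trans_eq ?_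
    push_cast; ring

/-! ### Nets of the unit ball -/

section nets

/-- A `1/8`-separated subset of the unit ball has at most `17 ^ dim` points: the balls of radius
`1/16` around its points are disjoint and lie in the ball of radius `17/16`. -/
lemma card_separated_le {E : Type*} [NormedAddCommGroup E] [NormedSpace ℝ E]
    [FiniteDimensional ℝ E] (s : Finset E) (hs : ∀ c ∈ s, ‖c‖ ≤ 1)
    (h : ∀ c ∈ s, ∀ d ∈ s, c ≠ d → 1 / 8 ≤ ‖c - d‖) :
    s.card ≤ 17 ^ Module.finrank ℝ E := by
  borelize E
  let μ : Measure E := Measure.addHaar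
  have hdis : Set.Pairwise (s : Set E)
      (Function.onFun Disjoint fun c => Metric.ball (c : E) (1 / 16)) := by
    intro c hc d hd hcd
    apply Metric.ball_disjoint_ball
    rw [dist_eq_norm]
    have := h c hc d hd hcd
    linarith
  have hsub : (⋃ c ∈ s, Metric.ball (c : E) (1 / 16)) ⊆ Metric.ball (0 : E) (17 / 16) := by
    refine Set.iUnion₂_subset fun x hx => Metric.ball_subset_ball' ?_
    rw [dist_zero_right]
    linarith [hs x hx]
  have hvol := measure_mono (μ := μ) hsub
  rw [measure_biUnion_finset hdis fun c _ => measurableSet_ball] at hvol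
  simp only [μ.addHaar_ball_of_pos _ (show (0 : ℝ) < 1 / 16 by norm_num),
    μ.addHaar_ball_of_pos _ (show (0 : ℝ) < 17 / 16 by norm_num),
    Finset.sum_const, nsmul_eq_mul, ← mul_assoc] at hvol
  have h1 := (ENNReal.mul_le_mul_iff_left (Metric.measure_ball_pos _ _ zero_lt_one).ne'
    measure_ball_lt_top.ne).1 hvol
  have h2 := ENNReal.toReal_le_of_le_ofReal (by positivity) h1
  rw [ENNReal.toReal_mul, ENNReal.toReal_natCast, ENNReal.toReal_ofReal (by positivity)] at h2
  have h3 : (17 / 16 : ℝ) = 17 * (1 / 16) := by norm_num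
  rw [h3, mul_pow] at h2
  have h4 : (s.card : ℝ) ≤ 17 ^ Module.finrank ℝ E :=
    le_of_mul_le_mul_right h2 (by positivity)
  exact_mod_cast h4

/-- A maximal separated set is a net. -/
lemma exists_net_normed (E : Type*) [NormedAddCommGroup E] [NormedSpace ℝ E]
    [FiniteDimensional ℝ E] :
    ∃ s : Finset E, s.card ≤ 17 ^ Module.finrank ℝ E ∧ (∀ c ∈ s, ‖c‖ ≤ 1) ∧
      ∀ v : E, ‖v‖ ≤ 1 → ∃ c ∈ s, ‖v - c‖ ≤ 1 / 8 := by
  classical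
  let K : Set ℕ := {k | ∃ s : Finset E, s.card = k ∧ (∀ c ∈ s, ‖c‖ ≤ 1) ∧
    ∀ c ∈ s, ∀ d ∈ s, c ≠ d → 1 / 8 ≤ ‖c - d‖}
  have hbdd : BddAbove K := by
    refine ⟨17 ^ Module.finrank ℝ E, ?_⟩
    rintro k ⟨s, rfl, h1, h2⟩
    exact card_separated_le s h1 h2
  have hne : K.Nonempty := ⟨0, ∅, by simp⟩
  obtain ⟨s, hcard, h1, h2⟩ := Nat.sSup_mem hne hbdd
  refine ⟨s, card_separated_le s h1 h2, h1, fun v hv => ?_⟩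
  by_contra! hcon
  have hvs : v ∉ s := fun hvs => by
    have := hcon v hvs
    simp at this
    linarith
  have hmem : s.card + 1 ∈ K := by
    refine ⟨insert v s, Finset.card_insert_of_notMem hvs, ?_, ?_⟩
    · intro c hc
      rcases Finset.mem_insert.1 hc with rfl | hc
      · exact hv
      · exact h1 c hc
    · intro c hc d hd hcd
      rw [Finset.mem_insert] at hc hd
      rcases hc with rfl | hc <;> rcases hd with rfl | hd
      · exact absurd rfl hcd
      · exact (hcon d hd).le
      · rw [norm_sub_rev]; exact (hcon c hc).le
      · exact h2 c hc d hd hcd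
  have := le_csSup hbdd hmem
  omega

/-- `N` is a finite set of vectors of norm at most one that forms a `1/8`-net of the unit ball of
the coordinate subspace of vectors supported on `S`. -/
structure IsNet {p : ℕ} (N : Finset (Fin p → ℝ)) (S : Finset (Fin p)) : Prop where
  nsq_le : ∀ c ∈ N, nsq c ≤ 1
  supp : ∀ c ∈ N, ∀ k ∉ S, c k = 0
  cover : ∀ v : Fin p → ℝ, (∀ k ∉ S, v k = 0) → nsq v ≤ 1 → ∃ c ∈ N, nsq (v - c) ≤ (1 / 8) ^ 2

lemma exists_net {p : ℕ} (S : Finset (Fin p)) :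
    ∃ N : Finset (Fin p → ℝ), N.card ≤ 17 ^ S.card ∧ IsNet N S := by
  classical
  obtain ⟨s, hcard, hs1, hs2⟩ := exists_net_normed (EuclideanSpace ℝ S)
  let ext : EuclideanSpace ℝ S → Fin p → ℝ := fun e k => if h : k ∈ S then e ⟨k, h⟩ else 0
  have hext : ∀ e, nsq (ext e) = ‖e‖ ^ 2 := by
    intro e
    rw [EuclideanSpace.real_norm_sq_eq, nsq, ← Finset.sum_subset (Finset.subset_univ S),
      ← Finset.sum_coe_sort S]
    · simp [ext]
    · intro k _ hk
      simp [ext, hk]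
  refine ⟨s.image ext, Finset.card_image_le.trans (by simpa using hcard), ?_, ?_, ?_⟩
  · intro c hc
    obtain ⟨e, he, rfl⟩ := Finset.mem_image.1 hc
    rw [hext]
    exact pow_le_one₀ (norm_nonneg _) (hs1 e he)
  · intro c hc k hk
    obtain ⟨e, he, rfl⟩ := Finset.mem_image.1 hc
    simp [ext, hk]
  · intro v hv hv1
    let e : EuclideanSpace ℝ S := WithLp.toLp 2 fun k => v k
    have hev : ext e = v := by
      funext k
      by_cases hk : k ∈ S
      · simp [ext, e, hk]
      · simp [ext, hk, hv k hk]
    have he1 : ‖e‖ ≤ 1 := by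
      have := hext e
      rw [hev] at this
      rw [this] at hv1
      exact (sq_le_one_iff₀ (norm_nonneg _)).1 hv1
    obtain ⟨c, hc, hc2⟩ := hs2 e he1
    refine ⟨ext c, Finset.mem_image_of_mem _ hc, ?_⟩
    have : v - ext c = ext (e - c) := by
      rw [← hev]
      funext k
      by_cases hk : k ∈ S <;> simp [ext, hk]
    rw [this, hext]
    gcongr

lemma l2_eq_sqrt {p : ℕ} (v : Fin p → ℝ) : l2 v = Real.sqrt (nsq v) := rfl

lemma l2_nonneg {p : ℕ} (v : Fin p → ℝ) : 0 ≤ l2 v := Real.sqrt_nonneg _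

lemma l2_sq {p : ℕ} (v : Fin p → ℝ) : l2 v ^ 2 = nsq v := Real.sq_sqrt (nsq_nonneg v)

lemma l2_eq_norm {p : ℕ} (v : Fin p → ℝ) : l2 v = ‖WithLp.toLp 2 v‖ := by
  rw [EuclideanSpace.norm_eq]
  simp [l2]

lemma nsq_smul {p : ℕ} (t : ℝ) (v : Fin p → ℝ) : nsq (t • v) = t ^ 2 * nsq v := by
  simp [nsq, mul_pow, Finset.mul_sum]

lemma l2_eq_zero {p : ℕ} {v : Fin p → ℝ} (h : l2 v = 0) : v = 0 := by
  apply nsq_eq_zero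
  rw [← l2_sq, h]; norm_num

lemma abs_le_l2 {p : ℕ} (v : Fin p → ℝ) (k : Fin p) : |v k| ≤ l2 v := by
  rw [l2_eq_sqrt]
  apply Real.abs_le_sqrt
  exact Finset.single_le_sum (f := fun k => v k ^ 2) (fun _ _ => sq_nonneg _) (Finset.mem_univ k)

lemma seminorm_le_l2 {p : ℕ} (F : Seminorm ℝ (Fin p → ℝ)) :
    ∃ K, 0 ≤ K ∧ ∀ v, F v ≤ K * l2 v := by
  classical
  refine ⟨∑ k, F (Pi.single k 1), Finset.sum_nonneg fun _ _ => apply_nonneg _ _, fun v => ?_⟩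
  have hv : v = ∑ k, v k • (Pi.single k (1 : ℝ) : Fin p → ℝ) := by
    simpa [← Pi.single_smul] using (Finset.univ_sum_single v).symm
  calc F v = F (∑ k, v k • (Pi.single k (1 : ℝ) : Fin p → ℝ)) := by rw [← hv]
    _ ≤ ∑ k, F (v k • (Pi.single k (1 : ℝ) : Fin p → ℝ)) :=
        Finset.le_sum_of_subadditive F (map_zero F).le (map_add_le_add F) _ _
    _ ≤ ∑ k, F (Pi.single k 1) * l2 v := by
        refine Finset.sum_le_sum fun k _ => ?_
        rw [map_smul_eq_mul, mul_comm]
        exact mul_le_mul_of_nonneg_left (abs_le_l2 v k) (apply_nonneg _ _)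
    _ = _ := by rw [Finset.sum_mul]

/-- A seminorm bounded by `B` on a `1/8`-net of a coordinate subspace is bounded by `8/7 * B` on the
unit ball of that subspace. -/
lemma IsNet.seminorm_le {p : ℕ} {N : Finset (Fin p → ℝ)} {S : Finset (Fin p)} (hN : IsNet N S)
    (F : Seminorm ℝ (Fin p → ℝ)) {B : ℝ} (hB : ∀ c ∈ N, F c ≤ B)
    (v : Fin p → ℝ) (hv : ∀ k ∉ S, v k = 0) : F v ≤ 8 / 7 * B * l2 v := by
  obtain ⟨K, hK0, hK⟩ := seminorm_le_l2 F
  let R : Set ℝ := {r | ∃ w : Fin p → ℝ, (∀ k ∉ S, w k = 0) ∧ l2 w ≤ 1 ∧ r = F w}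
  have hbdd : BddAbove R := by
    refine ⟨K, ?_⟩
    rintro r ⟨w, -, hw, rfl⟩
    exact (hK w).trans (mul_le_of_le_one_right hK0 hw)
  -- homogeneity turns the supremum over the unit ball into a bound for every vector
  have hhom : ∀ w : Fin p → ℝ, (∀ k ∉ S, w k = 0) → F w ≤ sSup R * l2 w := by
    intro w hw
    rcases eq_or_lt_of_le (l2_nonneg w) with h0 | h0
    · rw [l2_eq_zero h0.symm]; simp [l2]
    · have hmem : F ((l2 w)⁻¹ • w) ∈ R := by
        refine ⟨_, fun k hk => by simp [hw k hk], ?_, rfl⟩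
        rw [l2_eq_sqrt, nsq_smul, ← l2_sq, ← mul_pow, inv_mul_cancel₀ h0.ne']
        simp
      have := le_csSup hbdd hmem
      rw [map_smul_eq_mul, Real.norm_eq_abs, abs_of_pos (inv_pos.2 h0), inv_mul_le_iff₀ h0] at this
      linarith
  have hsup : sSup R ≤ B + sSup R * (1 / 8) := by
    refine csSup_le (⟨F 0, 0, by simp, by simp [l2], rfl⟩ : R.Nonempty) ?_
    rintro r ⟨w, hw, hw1, rfl⟩
    obtain ⟨c, hc, hwc⟩ := hN.cover w hw (by
      rw [← l2_sq]; exact pow_le_one₀ (l2_nonneg w) hw1)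
    have h1 : F w ≤ F c + F (w - c) := by
      simpa using map_add_le_add F c (w - c)
    have h2 := hhom (w - c) fun k hk => by simp [hw k hk, hN.supp c hc k hk]
    have h3 : l2 (w - c) ≤ 1 / 8 := Real.sqrt_le_iff.2 ⟨by norm_num, hwc⟩
    have hR0 : 0 ≤ sSup R := (apply_nonneg F (0 : Fin p → ℝ)).trans
      (le_csSup hbdd ⟨0, by simp, by simp [l2], rfl⟩)
    have h4 := mul_le_mul_of_nonneg_left h3 hR0
    linarith [hB c hc]
  refine (hhom v hv).trans ?_
  exact mul_le_mul_of_nonneg_right (by linarith) (l2_nonneg v)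

/-- `mulVec M` as a linear map. -/
def mulVecLin {p q : ℕ} (M : Fin p → Fin q → ℝ) : (Fin q → ℝ) →ₗ[ℝ] (Fin p → ℝ) where
  toFun := mulVec M
  map_add' v w := by funext i; simp [mulVec, mul_add, Finset.sum_add_distrib]
  map_smul' t v := by funext i; simp [mulVec, Finset.mul_sum, mul_left_comm]

/-- The seminorm `v ↦ ‖M v‖`. -/
def normSemi {p q : ℕ} (M : Fin p → Fin q → ℝ) : Seminorm ℝ (Fin q → ℝ) :=
  (normSeminorm ℝ (EuclideanSpace ℝ (Fin p))).comp
    ((WithLp.linearEquiv 2 ℝ (Fin p → ℝ)).symm.toLinearMap.comp (mulVecLin M))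

lemma normSemi_apply {p q : ℕ} (M : Fin p → Fin q → ℝ) (v : Fin q → ℝ) :
    normSemi M v = l2 (mulVec M v) := by
  rw [l2_eq_norm]; rfl

/-- The seminorm `v ↦ |⟨u, v⟩|`. -/
def dotSemi {p : ℕ} (u : Fin p → ℝ) : Seminorm ℝ (Fin p → ℝ) :=
  (normSeminorm ℝ ℝ).comp
    ({ toFun := dot u
       map_add' := fun v w => by simp [dot, mul_add, Finset.sum_add_distrib]
       map_smul' := fun t v => by simp [dot, Finset.mul_sum, mul_left_comm] } :
      (Fin p → ℝ) →ₗ[ℝ] ℝ)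

lemma dotSemi_apply {p : ℕ} (u v : Fin p → ℝ) : dotSemi u v = |dot u v| := rfl

lemma dot_comm {p : ℕ} (u v : Fin p → ℝ) : dot u v = dot v u := by
  simp [dot, mul_comm]

lemma dot_mulVec {p q : ℕ} (M : Fin p → Fin q → ℝ) (u : Fin p → ℝ) (v : Fin q → ℝ) :
    dot u (mulVec M v) = dot (mulVec (transpose M) u) v := by
  simp only [dot, mulVec, transpose, Finset.mul_sum, Finset.sum_mul]
  rw [Finset.sum_comm]
  exact Finset.sum_congr rfl fun j _ => Finset.sum_congr rfl fun i _ => by ring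

end nets

/-! ### From nets to spectral bounds -/

section deterministic

lemma l2_mulVec_le_of_net {m : ℕ} (M : Fin m → Fin m → ℝ) {N : Finset (Fin m → ℝ)}
    {S : Finset (Fin m)} (hN : IsNet N S) (hB : ∀ c ∈ N, nsq (mulVec M c) ≤ 3)
    (v : Fin m → ℝ) (hv : ∀ k ∉ S, v k = 0) : l2 (mulVec M v) ≤ 2 * l2 v := by
  have h := hN.seminorm_le (normSemi M) (B := 7 / 4) (fun c hc => by
    rw [normSemi_apply]
    exact Real.sqrt_le_iff.2 ⟨by norm_num, (hB c hc).trans (by norm_num)⟩) v hv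
  rw [normSemi_apply] at h
  linarith

lemma bilin_le_of_net {m : ℕ} (M : Fin m → Fin m → ℝ) {N N' : Finset (Fin m → ℝ)}
    {S S' : Finset (Fin m)} (hN : IsNet N S) (hN' : IsNet N' S') {ℓ : ℝ}
    (hB : ∀ c ∈ N, ∀ c' ∈ N', dot c (mulVec M c') ^ 2 ≤ 1 / ℓ)
    (u v : Fin m → ℝ) (hu : ∀ k ∉ S, u k = 0) (hv : ∀ k ∉ S', v k = 0) :
    |dot u (mulVec M v)| ≤ 2 * Real.sqrt (1 / ℓ) * l2 u * l2 v := by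
  have h1 : ∀ c ∈ N, |dot c (mulVec M v)| ≤ 8 / 7 * Real.sqrt (1 / ℓ) * l2 v := by
    intro c hc
    have := hN'.seminorm_le (dotSemi (mulVec (transpose M) c)) (B := Real.sqrt (1 / ℓ))
      (fun c' hc' => by
        rw [dotSemi_apply, ← dot_mulVec]
        exact Real.abs_le_sqrt (hB c hc c' hc')) v hv
    rwa [dotSemi_apply, ← dot_mulVec] at this
  have h2 := hN.seminorm_le (dotSemi (mulVec M v)) (fun c hc => by
    rw [dotSemi_apply, dot_comm]; exact h1 c hc) u hu
  rw [dotSemi_apply, dot_comm] at h2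
  refine h2.trans ?_
  have h0 : 0 ≤ Real.sqrt (1 / ℓ) * l2 v * l2 u :=
    mul_nonneg (mul_nonneg (Real.sqrt_nonneg _) (l2_nonneg v)) (l2_nonneg u)
  linarith

/-- A seminorm bounded on vectors supported on a single one of `J` blocks is bounded on all vectors,
with a loss of `√J` from Cauchy–Schwarz. -/
lemma seminorm_le_of_blocks {m J : ℕ} (blk : Fin m → Fin J) (F : Seminorm ℝ (Fin m → ℝ)) {B : ℝ}
    (hB0 : 0 ≤ B)
    (hB : ∀ j, ∀ v : Fin m → ℝ, (∀ k, blk k ≠ j → v k = 0) → F v ≤ B * l2 v) (v : Fin m → ℝ) :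
    F v ≤ B * Real.sqrt J * l2 v := by
  let w : Fin J → Fin m → ℝ := fun j k => if blk k = j then v k else 0
  have hw : v = ∑ j, w j := by
    funext k
    simp [w, Finset.sum_apply]
  have hnsq : ∑ j, l2 (w j) ^ 2 = nsq v := by
    simp only [l2_sq, nsq]
    rw [Finset.sum_comm]
    refine Finset.sum_congr rfl fun k _ => ?_
    simp [w, ite_pow]
  have hcs : ∑ j, l2 (w j) ≤ Real.sqrt J * l2 v := by
    rw [l2_eq_sqrt, ← Real.sqrt_mul (by positivity)]
    apply Real.le_sqrt_of_sq_le
    have := sq_sum_le_card_mul_sum_sq (s := Finset.univ) (f := fun j => l2 (w j))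
    simpa [hnsq] using this
  calc F v = F (∑ j, w j) := by rw [← hw]
    _ ≤ ∑ j, F (w j) := Finset.le_sum_of_subadditive F (map_zero F).le (map_add_le_add F) _ _
    _ ≤ ∑ j, B * l2 (w j) := Finset.sum_le_sum fun j _ => hB j (w j) fun k hk => by simp [w, hk]
    _ = B * ∑ j, l2 (w j) := by rw [Finset.mul_sum]
    _ ≤ B * (Real.sqrt J * l2 v) := mul_le_mul_of_nonneg_left hcs hB0
    _ = _ := by ring

lemma spec_le {p q : ℕ} (M : Fin p → Fin q → ℝ) {B : ℝ} (hB0 : 0 ≤ B)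
    (hB : ∀ v, l2 (mulVec M v) ≤ B * l2 v) : spec M ≤ B := by
  refine csSup_le ⟨_, 0, by simp [l2], rfl⟩ ?_
  rintro r ⟨v, hv, rfl⟩
  exact (hB v).trans (mul_le_of_le_one_right hB0 hv)

/-- The block net: a union of nets of the coordinate subspaces of the blocks. -/
lemma exists_block_net {m J q : ℕ} (blk : Fin m → Fin J)
    (hq : ∀ j, (Finset.univ.filter fun k => blk k = j).card ≤ q) :
    ∃ Q : Finset (Fin m → ℝ), Q.card ≤ J * 17 ^ q ∧ (∀ c ∈ Q, nsq c ≤ 1) ∧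
      ∀ j, ∃ N ⊆ Q, IsNet N (Finset.univ.filter fun k => blk k = j) := by
  classical
  choose N hN1 hN2 using fun S : Finset (Fin m) => exists_net S
  refine ⟨Finset.univ.biUnion fun j => N (Finset.univ.filter fun k => blk k = j), ?_, ?_, ?_⟩
  · refine (Finset.card_biUnion_le_card_mul _ _ (17 ^ q) fun j _ => ?_).trans (by simp)
    exact (hN1 _).trans (Nat.pow_le_pow_right (by norm_num) (hq j))
  · intro c hc
    obtain ⟨j, -, hj⟩ := Finset.mem_biUnion.1 hc
    exact (hN2 _).nsq_le c hj
  · intro j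
    exact ⟨_, Finset.subset_biUnion_of_mem
      (fun j => N (Finset.univ.filter fun k => blk k = j)) (Finset.mem_univ j), hN2 _⟩

/-- The sparse net: a union of nets over all coordinate subspaces of dimension `s`. -/
lemma exists_sparse_net {m s : ℕ} (hs : s ≤ m) :
    ∃ P : Finset (Fin m → ℝ), P.card ≤ m ^ s * 17 ^ s ∧ (∀ c ∈ P, nsq c ≤ 1) ∧
      ∀ v : Fin m → ℝ, l0 v ≤ s → ∃ N ⊆ P, ∃ S, IsNet N S ∧ ∀ k ∉ S, v k = 0 := by
  classical
  choose N hN1 hN2 using fun S : Finset (Fin m) => exists_net S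
  refine ⟨(Finset.powersetCard s Finset.univ).biUnion N, ?_, ?_, ?_⟩
  · refine (Finset.card_biUnion_le_card_mul _ _ (17 ^ s) fun S hS => ?_).trans ?_
    · rw [← (Finset.mem_powersetCard.1 hS).2]; exact hN1 S
    · rw [Finset.card_powersetCard, Finset.card_univ, Fintype.card_fin]
      exact Nat.mul_le_mul_right _ (Nat.choose_le_pow m s)
  · intro c hc
    obtain ⟨S, -, hS⟩ := Finset.mem_biUnion.1 hc
    exact (hN2 _).nsq_le c hS
  · intro v hv
    obtain ⟨S, hS1, hS2⟩ := Finset.exists_superset_card_eq hv (by simpa using hs)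
    refine ⟨N S, Finset.subset_biUnion_of_mem N (by simp [Finset.mem_powersetCard, hS2]), S,
      hN2 S, fun k hk => ?_⟩
    by_contra hne
    exact hk (hS1 (by simp [hne]))

/-- The three spectral bounds for a matrix `M` that behaves well on the sparse net `P` and on the
block net `Q`. -/
lemma bounds_of_nets {m J s L : ℕ} (hL : 0 < L) (M : Fin m → Fin m → ℝ) (blk : Fin m → Fin J)
    {P Q : Finset (Fin m → ℝ)}
    (hP : ∀ v : Fin m → ℝ, l0 v ≤ s → ∃ N ⊆ P, ∃ S, IsNet N S ∧ ∀ k ∉ S, v k = 0)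
    (hQ : ∀ j, ∃ N ⊆ Q, IsNet N (Finset.univ.filter fun k => blk k = j))
    (h1 : ∀ c ∈ P, nsq (mulVec M c) ≤ 3) (h2 : ∀ c ∈ Q, nsq (mulVec M c) ≤ 3)
    (h3 : ∀ c ∈ P, ∀ c' ∈ Q, dot c (mulVec M c') ^ 2 ≤ 1 / (L : ℝ))
    {C : ℝ} (hC : 0 ≤ C) (hJ : 4 * (J : ℝ) ≤ C ^ 2 * L) :
    spec M ≤ C * Real.sqrt L ∧ (∀ v, l0 v ≤ s → l2 (mulVec M v) ≤ 2 * l2 v) ∧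
      (∀ u, l0 u ≤ s → l2 (mulVec (transpose M) u) ≤ C * l2 u) := by
  have hL' : (0 : ℝ) < L := by exact_mod_cast hL
  have hsJ : 2 * Real.sqrt J ≤ C * Real.sqrt L := by
    have e1 : 2 * Real.sqrt J = Real.sqrt (4 * J) := by
      rw [Real.sqrt_mul (by norm_num)]
      congr 1
      rw [show (4 : ℝ) = 2 ^ 2 by norm_num, Real.sqrt_sq (by norm_num)]
    have e2 : C * Real.sqrt L = Real.sqrt (C ^ 2 * L) := by
      rw [Real.sqrt_mul (by positivity), Real.sqrt_sq hC]
    rw [e1, e2]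
    exact Real.sqrt_le_sqrt hJ
  refine ⟨spec_le M (by positivity) fun v => ?_, fun v hv => ?_, fun u hu => ?_⟩
  · have := seminorm_le_of_blocks blk (normSemi M) (B := 2) (by norm_num) (fun j w hw => by
      obtain ⟨N, hNQ, hN⟩ := hQ j
      rw [normSemi_apply]
      exact l2_mulVec_le_of_net M hN (fun c hc => h2 c (hNQ hc)) w fun k hk =>
        hw k (by simpa using hk)) v
    rw [normSemi_apply] at this
    exact this.trans (mul_le_mul_of_nonneg_right hsJ (l2_nonneg v))
  · obtain ⟨N, hNP, S, hN, hS⟩ := hP v hv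
    exact l2_mulVec_le_of_net M hN (fun c hc => h1 c (hNP hc)) v hS
  · obtain ⟨N, hNP, S, hN, hS⟩ := hP u hu
    set y := mulVec (transpose M) u with hy
    have := seminorm_le_of_blocks blk (dotSemi y) (B := 2 * Real.sqrt (1 / L) * l2 u)
      (by have := l2_nonneg u; positivity) (fun j w hw => by
        obtain ⟨N', hNQ, hN'⟩ := hQ j
        rw [dotSemi_apply, hy, ← dot_mulVec]
        exact bilin_le_of_net M hN hN' (fun c hc c' hc' => h3 c (hNP hc) c' (hNQ hc')) u w hS
          fun k hk => hw k (by simpa using hk)) y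
    have hyy : dotSemi y y = l2 y ^ 2 := by
      rw [dotSemi_apply, l2_sq, dot, nsq, abs_of_nonneg]
      · exact Finset.sum_congr rfl fun k _ => by ring
      · exact Finset.sum_nonneg fun k _ => mul_self_nonneg _
    have hle : 2 * Real.sqrt (1 / L) * l2 u * Real.sqrt J ≤ C * l2 u := by
      have hone : Real.sqrt (1 / L) * Real.sqrt L = 1 := by
        rw [← Real.sqrt_mul (by positivity), one_div_mul_cancel hL'.ne', Real.sqrt_one]
      calc 2 * Real.sqrt (1 / L) * l2 u * Real.sqrt J
          = Real.sqrt (1 / L) * l2 u * (2 * Real.sqrt J) := by ring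
        _ ≤ Real.sqrt (1 / L) * l2 u * (C * Real.sqrt L) :=
            mul_le_mul_of_nonneg_left hsJ (mul_nonneg (Real.sqrt_nonneg _) (l2_nonneg u))
        _ = (Real.sqrt (1 / L) * Real.sqrt L) * (C * l2 u) := by ring
        _ = _ := by rw [hone, one_mul]
    rw [hyy] at this
    rcases eq_or_lt_of_le (l2_nonneg y) with h0 | h0
    · rw [← h0]; exact mul_nonneg hC (l2_nonneg u)
    · refine le_of_mul_le_mul_right ?_ h0
      rw [← sq]
      exact this.trans (mul_le_mul_of_nonneg_right hle h0.le)

end deterministic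

/-! ### The union bound -/

section union

variable {Ω : Type*} [MeasurableSpace Ω] (μ : Measure Ω)

lemma measure_not_forall_le {ι : Type*} (s : Finset ι) (G : ι → Ω → Prop) {ε : ENNReal}
    (h : ∀ i ∈ s, μ {z | ¬ G i z} ≤ ε) : μ {z | ¬ ∀ i ∈ s, G i z} ≤ s.card * ε := by
  have : {z | ¬ ∀ i ∈ s, G i z} = ⋃ i ∈ s, {z | ¬ G i z} := by ext z; simp
  rw [this]
  refine (measure_biUnion_finset_le s _).trans ((Finset.sum_le_sum h).trans ?_)
  simp

lemma measure_not_forall_fin_le {n : ℕ} (G : Fin n → Ω → Prop) {ε : ENNReal}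
    (h : ∀ i, μ {z | ¬ G i z} ≤ ε) : μ {z | ¬ ∀ i, G i z} ≤ n * ε := by
  simpa using measure_not_forall_le μ Finset.univ G fun i _ => h i

lemma measure_not_and_le {G H : Ω → Prop} {ε δ : ENNReal} (hG : μ {z | ¬ G z} ≤ ε)
    (hH : μ {z | ¬ H z} ≤ δ) : μ {z | ¬ (G z ∧ H z)} ≤ ε + δ := by
  have : {z | ¬ (G z ∧ H z)} ⊆ {z | ¬ G z} ∪ {z | ¬ H z} := by
    intro z hz
    by_cases h : G z
    · exact Or.inr fun h' => hz ⟨h, h'⟩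
    · exact Or.inl h
  exact (measure_mono this).trans ((measure_union_le _ _).trans (add_le_add hG hH))

/-- No layer is degenerate for any sample, and every partial product behaves well on the nets. -/
def GoodInit {𝔡 m L n : ℕ} (x : Fin n → Fin 𝔡 → ℝ) (P Q : Finset (Fin m → ℝ))
    (z : (Fin m → Fin 𝔡 → ℝ) × (Fin L → Fin m → Fin m → ℝ)) : Prop :=
  ∀ i, (¬ ∃ ℓ ≤ L, Degen (gseq z.1 z.2 (x i) ℓ)) ∧ ∀ a k : Fin L,
    (∀ c ∈ P, nsq (mulVec (Wat z.2 (k + 1)) (zvec z.1 z.2 (x i) c (a + 1) k)) ≤ 3) ∧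
    (∀ c ∈ Q, nsq (mulVec (Wat z.2 (k + 1)) (zvec z.1 z.2 (x i) c (a + 1) k)) ≤ 3) ∧
    ∀ c ∈ P, ∀ c' ∈ Q,
      (∑ j, mulVec (Wat z.2 (k + 1)) (zvec z.1 z.2 (x i) c' (a + 1) k) j * c j) ^ 2 ≤ 1 / (L : ℝ)

lemma measure_not_goodInit_le {𝔡 m L n κ : ℕ} (hm : 0 < m) (hκ0 : 0 < κ) (hL : 0 < L)
    (hκ : 60 * κ * L ≤ m) (x : Fin n → Fin 𝔡 → ℝ) (hx : ∀ i, x i ≠ 0)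
    (P Q : Finset (Fin m → ℝ)) (hP : ∀ c ∈ P, nsq c ≤ 1) (hQ : ∀ c ∈ Q, nsq c ≤ 1) :
    initAW 𝔡 m L {z | ¬ GoodInit x P Q z} ≤ ENNReal.ofReal (n * ((L + 1) * (1 / 2) ^ m +
      L * (L * ((P.card + Q.card + P.card * Q.card) * Real.exp (-(κ / 8)))))) := by
  have he := (Real.exp_pos (-((κ : ℝ) / 8))).le
  have main : initAW 𝔡 m L {z | ¬ GoodInit x P Q z} ≤ n * ((L + 1 : ℕ) * ENNReal.ofReal ((1 / 2) ^ m)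
      + L * (L * (P.card * ENNReal.ofReal (Real.exp (-(κ / 8)))
        + (Q.card * ENNReal.ofReal (Real.exp (-(κ / 8)))
          + P.card * (Q.card * ENNReal.ofReal (Real.exp (-(κ / 8)))))))) := by
    refine measure_not_forall_fin_le _ _ fun i => measure_not_and_le _ ?_ ?_
    · simpa only [not_not] using degen_prob hm (x i) (hx i) L le_rfl
    · refine measure_not_forall_fin_le _ _ fun a => measure_not_forall_fin_le _ _ fun k =>
        measure_not_and_le _ ?_ (measure_not_and_le _ ?_ ?_)
      · refine measure_not_forall_le _ P _ fun c hc => ?_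
        simpa only [not_le] using norm_tail hm κ hκ0 hL hκ (x i) c (hP c hc) (a + 1) k
      · refine measure_not_forall_le _ Q _ fun c hc => ?_
        simpa only [not_le] using norm_tail hm κ hκ0 hL hκ (x i) c (hQ c hc) (a + 1) k
      · refine measure_not_forall_le _ P _ fun c hc => measure_not_forall_le _ Q _ fun c' hc' => ?_
        simpa only [not_le] using
          bilin_tail hm κ hκ0 hL hκ (x i) c' c (hQ c' hc') (hP c hc) (a + 1) k
  refine main.trans_eq ?_
  simp (disch := positivity) only [ENNReal.ofReal_mul, ENNReal.ofReal_add, ENNReal.ofReal_natCast,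
    ENNReal.ofReal_one]
  push_cast
  ring

end union

/-! ### Counting -/

section counting

/-- The union bound: with `b = exp t` at least `n L`, all counts are at most powers of `b`, and each
bad event has probability at most `b ^ (-1000)`. -/
lemma union_sum_le {n L p q h e t : ℝ} (hn : 1 ≤ n) (hL : 2 ≤ L) (ht : n * L ≤ Real.exp t)
    (hp0 : 0 ≤ p) (hq0 : 0 ≤ q) (he0 : 0 ≤ e)
    (hp : p ≤ Real.exp (2 * t)) (hq : q ≤ 40001 * L * Real.exp (150 * t))
    (hh : h ≤ Real.exp (-(1000 * t))) (he : e ≤ Real.exp (-(1000 * t))) :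
    n * ((L + 1) * h + L * (L * ((p + q + p * q) * e))) ≤ Real.exp (-(250 * t)) := by
  set b := Real.exp t with hb
  set d := Real.exp (-(1000 * t)) with hd
  have hpow : ∀ k : ℕ, Real.exp (k * t) = b ^ k := fun k => Real.exp_nat_mul t k
  have hd0 : 0 < d := Real.exp_pos _
  have hb2 : 2 ≤ b := by nlinarith
  have hLb : L ≤ b := by nlinarith
  have hnL1 : n * (L + 1) ≤ b ^ 2 := by nlinarith
  have hnL2 : n * L * L ≤ b ^ 2 := by nlinarith
  have h40 : (40001 : ℝ) ≤ b ^ 16 := by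
    calc (40001 : ℝ) ≤ 2 ^ 16 := by norm_num
      _ ≤ b ^ 16 := by gcongr
  have h3 : (3 : ℝ) ≤ b ^ 2 := by nlinarith
  have hp' : p ≤ b ^ 2 := by
    have := hpow 2; push_cast at this; rwa [this] at hp
  have hq' : q ≤ b ^ 167 := by
    have := hpow 150; push_cast at this; rw [this] at hq
    calc q ≤ 40001 * L * b ^ 150 := hq
      _ ≤ b ^ 16 * b * b ^ 150 := by gcongr
      _ = b ^ 167 := by ring
  have hb1 : 1 ≤ b := by linarith
  have hsum : p + q + p * q ≤ b ^ 171 := by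
    have e1 : b ^ 2 ≤ b ^ 169 := pow_le_pow_right₀ hb1 (by norm_num)
    have e2 : b ^ 167 ≤ b ^ 169 := pow_le_pow_right₀ hb1 (by norm_num)
    have e3 : p * q ≤ b ^ 2 * b ^ 167 := by gcongr
    have e4 : b ^ 2 * b ^ 167 = b ^ 169 := by ring
    calc p + q + p * q ≤ 3 * b ^ 169 := by linarith
      _ ≤ b ^ 2 * b ^ 169 := by gcongr
      _ = b ^ 171 := by ring
  have hfin : b ^ 175 * d ≤ Real.exp (-(250 * t)) := by
    rw [← hpow, hd, ← Real.exp_add]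
    apply Real.exp_le_exp.2
    have ht0 : 0 ≤ t := by
      rw [hb] at hb1; exact Real.one_le_exp_iff.1 hb1
    push_cast
    linarith
  have hn0 : 0 ≤ n := by linarith
  have hL0 : 0 ≤ L := by linarith
  calc n * ((L + 1) * h + L * (L * ((p + q + p * q) * e)))
      = n * (L + 1) * h + n * L * L * ((p + q + p * q) * e) := by ring
    _ ≤ n * (L + 1) * d + n * L * L * (b ^ 171 * d) := by gcongr
    _ ≤ b ^ 2 * d + b ^ 2 * (b ^ 171 * d) := by gcongr
    _ ≤ b ^ 173 * d + b ^ 173 * d := by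
        have : b ^ 2 ≤ b ^ 173 := pow_le_pow_right₀ hb1 (by norm_num)
        have h5 : b ^ 2 * (b ^ 171 * d) = b ^ 173 * d := by ring
        rw [h5]
        gcongr
    _ = 2 * (b ^ 173 * d) := by ring
    _ ≤ b ^ 2 * (b ^ 173 * d) := by
        gcongr
        nlinarith
    _ = b ^ 175 * d := by ring
    _ ≤ _ := hfin

/-- The fibres of `k ↦ k / q` are the consecutive blocks of length `q`. -/
lemma card_block_le {m q : ℕ} (hq : 0 < q) (j : ℕ) :
    (Finset.univ.filter fun k : Fin m => (k : ℕ) / q = j).card ≤ q := by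
  have : ((Finset.univ.filter fun k : Fin m => (k : ℕ) / q = j)).card ≤ (Finset.range q).card := by
    refine Finset.card_le_card_of_injOn (fun k => (k : ℕ) % q) ?_ ?_
    · intro k _
      simpa using Nat.mod_lt _ hq
    · intro k hk k' hk' h
      simp only [Finset.coe_filter, Finset.mem_univ, true_and, Set.mem_ofPred_eq] at hk hk' h
      apply Fin.ext
      rw [← Nat.div_add_mod (k : ℕ) q, ← Nat.div_add_mod (k' : ℕ) q, hk, hk', h]
  simpa using this

end counting

lemma seventeen_le_exp : (17 : ℝ) ≤ Real.exp 3 := by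
  have h := Real.exp_one_gt_d9
  calc (17 : ℝ) ≤ 2.7 ^ 3 := by norm_num
    _ ≤ Real.exp 1 ^ 3 := by gcongr; linarith
    _ = Real.exp 3 := by rw [← Real.exp_nat_mul]; norm_num

/-- Lemma 7.2 a–c, intermediate-layer spectral bounds at initialization. -/
theorem statement6 :
    ∃ C c : ℝ, 0 < C ∧ 0 < c ∧
      ∀ (𝔡 m L n : ℕ) (h𝔡 : 0 < 𝔡) (hL : 2 ≤ L) (hm : 0 < m) (hn : 0 < n)
        (x : Fin n → Fin 𝔡 → ℝ), (∀ i, l2 (x i) = 1) →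
        C * (n : ℝ) * (L : ℝ) * Real.log ((n : ℝ) * (L : ℝ)) ≤ (m : ℝ) →
        ENNReal.ofReal (1 - Real.exp (-(c * (m : ℝ) / (L : ℝ)))) ≤
          initAW 𝔡 m L
            {z | ∀ (i : Fin n) (a b : ℕ), 1 ≤ a → a ≤ b → b ≤ L →
              spec (mmul (Wat z.2 b) (prodDW z.1 z.2 (x i) a (b - 1))) ≤
                  C * Real.sqrt L ∧
              (∀ v : Fin m → ℝ, (l0 v : ℝ) ≤ (m : ℝ) / (C * (L : ℝ) * Real.log m) →
                l2 (mulVec (mmul (Wat z.2 b) (prodDW z.1 z.2 (x i) a (b - 1))) v) ≤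
                  2 * l2 v) ∧
              (∀ u : Fin m → ℝ, (l0 u : ℝ) ≤ (m : ℝ) / (C * (L : ℝ) * Real.log m) →
                l2 (mulVec (transpose (mmul (Wat z.2 b) (prodDW z.1 z.2 (x i) a (b - 1)))) u) ≤
                  C * l2 u)} := by
  refine ⟨10 ^ 6, 1 / 4000, by norm_num, by norm_num, ?_⟩
  intro 𝔡 m L n h𝔡 hL hm hn x hx hmC
  have hm' : (0 : ℝ) < m := by exact_mod_cast hm
  have hL' : (2 : ℝ) ≤ L := by exact_mod_cast hL
  have hL0 : (0 : ℝ) < L := by linarith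
  have hn' : (1 : ℝ) ≤ n := by exact_mod_cast hn
  have hnL : (2 : ℝ) ≤ n * L := by nlinarith
  -- the basic scale: `t` is `m / L` in units of the constant `C = 10 ^ 6`
  obtain ⟨t, ht⟩ : ∃ t : ℝ, (m : ℝ) = 10 ^ 6 * t * L :=
    ⟨m / (10 ^ 6 * L), by field_simp⟩
  have hlog2 : (0.69 : ℝ) ≤ Real.log (n * L) :=
    (by linarith [Real.log_two_gt_d9] : (0.69 : ℝ) ≤ Real.log 2).trans
      (Real.log_le_log (by norm_num) hnL)
  have htlog : Real.log (n * L) ≤ t := by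
    have h1 : 10 ^ 6 * L * Real.log (n * L) ≤ 10 ^ 6 * L * t := by
      calc 10 ^ 6 * L * Real.log (n * L) ≤ n * (10 ^ 6 * L * Real.log (n * L)) :=
            le_mul_of_one_le_left (by positivity) hn'
        _ = 10 ^ 6 * n * L * Real.log (n * L) := by ring
        _ ≤ _ := by rw [ht] at hmC; linarith
    exact le_of_mul_le_mul_left h1 (by positivity)
  have ht1 : 0.69 ≤ t := hlog2.trans htlog
  have ht0 : 0 < t := by linarith
  have hexp : (n : ℝ) * L ≤ Real.exp t := (Real.log_le_iff_le_exp (by positivity)).1 htlog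
  have hmt : 10 ^ 6 * t ≤ m := by rw [ht]; nlinarith
  have hm17 : (17 : ℝ) ≤ m := by linarith
  have hlogm : 1 ≤ Real.log m := by
    rw [Real.le_log_iff_exp_le hm']
    linarith [Real.exp_one_lt_d9]
  -- the moment order
  set κ := ⌊10 ^ 6 * t / 60⌋₊ with hκ
  have hκle : (κ : ℝ) ≤ 10 ^ 6 * t / 60 := Nat.floor_le (by positivity)
  have hκge : 10 ^ 6 * t / 60 < κ + 1 := Nat.lt_floor_add_one _
  have hκ0 : 0 < κ := by
    have : (0 : ℝ) < κ := by linarith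
    exact_mod_cast this
  have hκm : 60 * κ * L ≤ m := by
    have : (60 : ℝ) * κ * L ≤ m := by
      rw [ht]
      exact mul_le_mul_of_nonneg_right (by linarith) hL0.le
    exact_mod_cast this
  -- the block length
  set q := ⌊50 * t⌋₊ with hq
  have hqle : (q : ℝ) ≤ 50 * t := Nat.floor_le (by positivity)
  have hqge : 50 * t < q + 1 := Nat.lt_floor_add_one _
  have hqt : 25 * t ≤ q := by linarith
  have hq0 : 0 < q := by
    have : (0 : ℝ) < q := by linarith
    exact_mod_cast this
  have hq0' : (0 : ℝ) < q := by exact_mod_cast hq0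
  set J := m / q + 1 with hJ
  have hJL : (J : ℝ) ≤ 40001 * L := by
    have h1 : ((m / q : ℕ) : ℝ) ≤ 40000 * L := by
      refine Nat.cast_div_le.trans ?_
      rw [div_le_iff₀ hq0', ht]
      nlinarith
    rw [hJ]; push_cast; linarith
  let blk : Fin m → Fin J := fun k => ⟨(k : ℕ) / q,
    Nat.lt_succ_of_le (Nat.div_le_div_right k.2.le)⟩
  obtain ⟨Q, hQcard, hQ1, hQnet⟩ := exists_block_net (q := q) blk fun j => by
    refine le_trans (le_of_eq ?_) (card_block_le (m := m) hq0 j)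
    congr 1
    ext k
    simp [blk, Fin.ext_iff]
  -- the sparsity level
  set s := ⌊(m : ℝ) / (10 ^ 6 * L * Real.log m)⌋₊ with hs
  have hsle : (s : ℝ) * Real.log m ≤ t := by
    have h1 : (s : ℝ) ≤ m / (10 ^ 6 * L * Real.log m) := Nat.floor_le (by positivity)
    have h2 : (m : ℝ) / (10 ^ 6 * L * Real.log m) = t / Real.log m := by
      rw [ht]; field_simp
    rwa [h2, le_div_iff₀ (by linarith)] at h1
  have hsm : s ≤ m := by
    have : (s : ℝ) ≤ m := by nlinarith [(Nat.cast_nonneg s : (0 : ℝ) ≤ s)]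
    exact_mod_cast this
  obtain ⟨P, hPcard, hP1, hPnet⟩ := exists_sparse_net hsm
  have hPexp : (P.card : ℝ) ≤ Real.exp (2 * t) := by
    calc (P.card : ℝ) ≤ (m : ℝ) ^ s * 17 ^ s := by exact_mod_cast hPcard
      _ ≤ (m : ℝ) ^ s * (m : ℝ) ^ s := by gcongr
      _ = Real.exp (2 * (s * Real.log m)) := by
          rw [two_mul, Real.exp_add, Real.exp_nat_mul, Real.exp_log hm']
      _ ≤ _ := by gcongr
  have hQexp : (Q.card : ℝ) ≤ 40001 * L * Real.exp (150 * t) := by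
    calc (Q.card : ℝ) ≤ (J : ℝ) * 17 ^ q := by exact_mod_cast hQcard
      _ ≤ 40001 * L * Real.exp 3 ^ q := by gcongr; exact seventeen_le_exp
      _ = 40001 * L * Real.exp (q * 3) := by rw [Real.exp_nat_mul]
      _ ≤ _ :=
          mul_le_mul_of_nonneg_left (Real.exp_le_exp.2 (by linarith)) (by positivity)
  have hhalf : (1 / 2 : ℝ) ^ m ≤ Real.exp (-(1000 * t)) := by
    have h1 : (1 / 2 : ℝ) = Real.exp (-Real.log 2) := by
      rw [Real.exp_neg, Real.exp_log (by norm_num)]; norm_num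
    rw [h1, ← Real.exp_nat_mul]
    apply Real.exp_le_exp.2
    nlinarith [Real.log_two_gt_d9]
  have hbad := measure_not_goodInit_le (𝔡 := 𝔡) hm hκ0 (by omega) hκm x (fun i h0 => by
    have := hx i
    rw [h0] at this
    simp [l2] at this) P Q hP1 hQ1
  have hsum := union_sum_le hn' hL' hexp (Nat.cast_nonneg P.card) (Nat.cast_nonneg Q.card)
    (Real.exp_pos (-((κ : ℝ) / 8))).le hPexp hQexp hhalf
    (Real.exp_le_exp.2 (by linarith))
  have hbad' := hbad.trans (ENNReal.ofReal_le_ofReal hsum)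
  have hgoal : -(1 / 4000 * (m : ℝ) / L) = -(250 * t) := by
    rw [ht]; field_simp; norm_num
  rw [hgoal, ENNReal.ofReal_sub _ (Real.exp_pos _).le, ENNReal.ofReal_one, tsub_le_iff_right]
  have huniv : (1 : ENNReal) ≤ initAW 𝔡 m L {z | GoodInit x P Q z} +
      initAW 𝔡 m L {z | ¬ GoodInit x P Q z} := by
    rw [← measure_univ (μ := initAW 𝔡 m L)]
    refine (measure_mono fun z _ => ?_).trans (measure_union_le _ _)
    exact em (GoodInit x P Q z)
  refine huniv.trans (add_le_add (measure_mono ?_) hbad')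
  intro z hz i a b ha hab hbL
  obtain ⟨hdeg, hnet⟩ := hz i
  obtain ⟨k, rfl⟩ : ∃ k, b = k + 1 := ⟨b - 1, by omega⟩
  obtain ⟨a, rfl⟩ : ∃ a', a = a' + 1 := ⟨a - 1, by omega⟩
  obtain ⟨h1, h2, h3⟩ := hnet ⟨a, by omega⟩ ⟨k, by omega⟩
  have hmv : ∀ v, mulVec (mmul (Wat z.2 (k + 1)) (prodDW z.1 z.2 (x i) (a + 1) k)) v =
      mulVec (Wat z.2 (k + 1)) (zvec z.1 z.2 (x i) v (a + 1) k) := fun v => by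
    rw [mulVec_mmul, mulVec_prodDW _ _ _ (by push Not at hdeg; exact hdeg)]
  have hres := bounds_of_nets (s := s) (L := L) (by omega)
    (mmul (Wat z.2 (k + 1)) (prodDW z.1 z.2 (x i) (a + 1) k)) blk hPnet hQnet
    (fun c hc => by rw [hmv]; exact h1 c hc) (fun c hc => by rw [hmv]; exact h2 c hc)
    (fun c hc c' hc' => by rw [hmv, dot_comm]; exact h3 c hc c' hc')
    (C := 10 ^ 6) (by norm_num) (by linarith)
  exact ⟨hres.1, fun v hv => hres.2.1 v (Nat.le_floor hv), fun u hu => hres.2.2 u (Nat.le_floor hu)⟩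

end DNNPaper
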